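/- arXiv:2103.11205 — 3 statements merged into one kernel-verified Lean document; each statement's English description precedes it below -/
import Mathlib

section
/- In the one-dimensional Gaussian case, where U₁ and U₂ are independent centered Gaussian random variables with variances σ₁², σ₂² > 0, Moran's test φ is a regular test of level α that is inadmissible among regular tests: φ ∈ Φ₀(α) \ A₀(α). -/
open MeasureTheory ProbabilityTheory

namespace Moran
open Filter Topology

/-- The joint density. -/
noncomputable def dens (v₁ v₂ : NNReal) (θ : ℝ) (x : ℝ × ℝ) : ℝ :=
  gaussianPDFReal 0 v₁ (x.1 - θ) * gaussianPDFReal 0 v₂ (x.2 - θ)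

/-- The sufficient statistic. -/
noncomputable def T (v₁ v₂ : NNReal) (x : ℝ × ℝ) : ℝ := x.1 / v₁ + x.2 / v₂

lemma dens_nonneg (v₁ v₂ : NNReal) (θ : ℝ) (x : ℝ × ℝ) : 0 ≤ dens v₁ v₂ θ x :=
  mul_nonneg (gaussianPDFReal_nonneg _ _ _) (gaussianPDFReal_nonneg _ _ _)

lemma dens_pos (v₁ v₂ : NNReal) (h₁ : 0 < v₁) (h₂ : 0 < v₂) (θ : ℝ) (x : ℝ × ℝ) :
    0 < dens v₁ v₂ θ x :=
  mul_pos (gaussianPDFReal_pos _ _ _ h₁.ne') (gaussianPDFReal_pos _ _ _ h₂.ne')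

lemma gauss_tilt (v : NNReal) (hv : 0 < v) (θ y : ℝ) :
    gaussianPDFReal 0 v (y - θ) =
      gaussianPDFReal 0 v y * Real.exp (θ * (y / v)) * Real.exp (-(θ ^ 2 / (2 * v))) := by
  have : (v : ℝ) ≠ 0 := by exact_mod_cast hv.ne'
  simp only [gaussianPDFReal, mul_assoc, ← Real.exp_add]
  congr 2
  field_simp
  ring

lemma dens_tilt (v₁ v₂ : NNReal) (h₁ : 0 < v₁) (h₂ : 0 < v₂) (θ : ℝ) (x : ℝ × ℝ) :
    dens v₁ v₂ θ x = Real.exp (-(θ ^ 2 / (2 * v₁)) + -(θ ^ 2 / (2 * v₂))) *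
      (dens v₁ v₂ 0 x * Real.exp (θ * T v₁ v₂ x)) := by
  simp only [dens, gauss_tilt v₁ h₁ θ, gauss_tilt v₂ h₂ θ, T, sub_zero, mul_add, Real.exp_add]
  ring

lemma continuous_gauss (v : NNReal) : Continuous (gaussianPDFReal 0 v) := by
  rw [gaussianPDFReal_def]; fun_prop

lemma continuous_dens (v₁ v₂ : NNReal) :
    Continuous (fun p : ℝ × (ℝ × ℝ) => dens v₁ v₂ p.1 p.2) := by
  have := continuous_gauss v₁
  have := continuous_gauss v₂
  unfold dens; fun_prop

lemma continuous_dens_x (v₁ v₂ : NNReal) (θ : ℝ) : Continuous (dens v₁ v₂ θ) := by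
  have := continuous_gauss v₁
  have := continuous_gauss v₂
  unfold dens; fun_prop

lemma continuous_T (v₁ v₂ : NNReal) : Continuous (T v₁ v₂) := by
  unfold T; fun_prop

lemma gauss_shift (v : NNReal) (θ y : ℝ) :
    gaussianPDFReal 0 v (y - θ) = gaussianPDFReal θ v y := by
  rw [gaussianPDFReal_sub]; simp

lemma integrable_dens (v₁ v₂ : NNReal) (θ : ℝ) : Integrable (dens v₁ v₂ θ) := by
  have := (integrable_gaussianPDFReal θ v₁).mul_prod (integrable_gaussianPDFReal θ v₂)
  refine this.congr (Eventually.of_forall fun x => ?_)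
  simp [dens, gauss_shift]

lemma gauss_bound (v : NNReal) (hv : 0 < v) (θ₀ θ y : ℝ) (h : |θ - θ₀| < 1) :
    gaussianPDFReal 0 v (y - θ) ≤
      √2 * Real.exp (1 / (2 * v)) * gaussianPDFReal θ₀ (2 * v) y := by
  have hv' : (0 : ℝ) < v := by exact_mod_cast hv
  have e : √2 * Real.exp (1 / (2 * v)) * gaussianPDFReal θ₀ (2 * v) y
      = (√(2 * Real.pi * v))⁻¹ * Real.exp (1 / (2 * v) + -(y - θ₀) ^ 2 / (2 * (2 * v))) := by
    rw [gaussianPDFReal, Real.exp_add]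
    have : √(2 * Real.pi * ((2 * v : NNReal) : ℝ)) = √2 * √(2 * Real.pi * v) := by
      rw [← Real.sqrt_mul (by norm_num)]; congr 1; push_cast; ring
    rw [this]
    have h2 : √(2:ℝ) ≠ 0 := by positivity
    push_cast
    field_simp
  rw [e, gaussianPDFReal]
  gcongr
  rw [div_add_div _ _ (by positivity) (by positivity), div_le_div_iff₀ (by positivity) (by positivity)]
  have h1 : (θ - θ₀) ^ 2 ≤ 1 := by
    have := sq_abs (θ - θ₀)
    nlinarith [abs_nonneg (θ - θ₀)]
  have key : -(y - θ - 0) ^ 2 * 2 ≤ 2 + -(y - θ₀) ^ 2 := by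
    nlinarith [sq_nonneg (y - θ₀ - 2 * (θ - θ₀))]
  have hv2 : (0 : ℝ) < (v : ℝ) ^ 2 := by positivity
  nlinarith [mul_le_mul_of_nonneg_left key hv2.le]

lemma continuous_power (v₁ v₂ : NNReal) (h₁ : 0 < v₁) (h₂ : 0 < v₂) (f : ℝ × ℝ → ℝ)
    (hf : Measurable f) (hb : ∀ x, f x ∈ Set.Icc (0 : ℝ) 1) :
    Continuous (fun θ => ∫ x, dens v₁ v₂ θ x * f x) := by
  rw [continuous_iff_continuousAt]
  intro θ₀
  refine continuousAt_of_dominated (bound := fun x =>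
    (√2 * Real.exp (1 / (2 * v₁)) * gaussianPDFReal θ₀ (2 * v₁) x.1) *
    (√2 * Real.exp (1 / (2 * v₂)) * gaussianPDFReal θ₀ (2 * v₂) x.2)) ?_ ?_ ?_ ?_
  · exact Eventually.of_forall fun θ =>
      ((continuous_dens_x v₁ v₂ θ).measurable.mul hf).aestronglyMeasurable
  · filter_upwards [Metric.ball_mem_nhds θ₀ one_pos] with θ hθ
    rw [Metric.mem_ball, Real.dist_eq] at hθ
    refine Eventually.of_forall fun x => ?_
    rw [norm_mul, Real.norm_of_nonneg (dens_nonneg _ _ _ _), Real.norm_of_nonneg (hb x).1]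
    refine (mul_le_of_le_one_right (dens_nonneg _ _ _ _) (hb x).2).trans ?_
    exact mul_le_mul (gauss_bound v₁ h₁ _ _ _ hθ) (gauss_bound v₂ h₂ _ _ _ hθ)
      (gaussianPDFReal_nonneg _ _ _)
      ((gaussianPDFReal_nonneg _ _ _).trans (gauss_bound v₁ h₁ _ _ _ hθ))
  · exact ((integrable_gaussianPDFReal θ₀ _).const_mul _).mul_prod
      ((integrable_gaussianPDFReal θ₀ _).const_mul _)
  · refine Eventually.of_forall fun x => ?_
    exact (((continuous_dens v₁ v₂).comp (Continuous.prodMk_left x)).mul continuous_const).continuousAt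

lemma chord (θ : ℝ) (hθ : θ ≠ 0) (c d : ℝ) (hcd : c < d) : ∃ m k : ℝ,
    (∀ t, c < t → t < d → Real.exp (θ * t) < m + k * t) ∧
    (∀ t, t ≤ c → m + k * t ≤ Real.exp (θ * t)) ∧
    (∀ t, d ≤ t → m + k * t ≤ Real.exp (θ * t)) := by
  have hc : StrictConvexOn ℝ Set.univ (fun t : ℝ => Real.exp (θ * t)) := by
    refine ⟨convex_univ, fun x _ y _ hxy a b ha hb hab => ?_⟩
    have := strictConvexOn_exp.2 (Set.mem_univ (θ * x)) (Set.mem_univ (θ * y))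
      (fun h => hxy (mul_left_cancel₀ hθ h)) ha hb hab
    simp only [smul_eq_mul] at this ⊢
    convert this using 2
    ring
  have hdc : 0 < d - c := by linarith
  obtain ⟨k, hk⟩ : ∃ k, k = (Real.exp (θ * d) - Real.exp (θ * c)) / (d - c) := ⟨_, rfl⟩
  have hk' : k * (d - c) = Real.exp (θ * d) - Real.exp (θ * c) := by rw [hk]; field_simp
  refine ⟨Real.exp (θ * c) - k * c, k, ?_, ?_, ?_⟩
  · intro t h1 h2
    have := hc.slope_strict_mono_adjacent (Set.mem_univ c) (Set.mem_univ d) h1 h2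
    rw [div_lt_div_iff₀ (by linarith) (by linarith)] at this
    nlinarith
  · intro t h1
    rcases h1.eq_or_lt with rfl | h1
    · linarith
    have := hc.slope_strict_mono_adjacent (Set.mem_univ t) (Set.mem_univ d) h1 hcd
    rw [← hk, div_lt_iff₀ (by linarith)] at this
    nlinarith
  · intro t h1
    rcases h1.eq_or_lt with rfl | h1
    · linarith
    have := hc.slope_strict_mono_adjacent (Set.mem_univ c) (Set.mem_univ t) hcd h1
    rw [← hk, lt_div_iff₀ (by linarith)] at this
    nlinarith

/-- Open boxes. -/
def box (p q r s : ℝ) : Set (ℝ × ℝ) := Set.Ioo p q ×ˢ Set.Ioo r s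

lemma measurableSet_box (p q r s : ℝ) : MeasurableSet (box p q r s) :=
  measurableSet_Ioo.prod measurableSet_Ioo

lemma integrableOn_box {h : ℝ × ℝ → ℝ} (hh : Continuous h) (p q r s : ℝ) :
    IntegrableOn h (box p q r s) :=
  (hh.continuousOn.integrableOn_compact (isCompact_Icc.prod isCompact_Icc)).mono_set
    (Set.prod_mono Set.Ioo_subset_Icc_self Set.Ioo_subset_Icc_self)

lemma pos_box {h : ℝ × ℝ → ℝ} (hh : Continuous h) {p q r s : ℝ} (hpq : p < q) (hrs : r < s)
    (hpos : ∀ x ∈ box p q r s, 0 < h x) : 0 < ∫ x in box p q r s, h x := by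
  rw [setIntegral_pos_iff_support_of_nonneg_ae _ (integrableOn_box hh _ _ _ _)]
  · have : box p q r s ⊆ Function.support h ∩ box p q r s := fun x hx => ⟨(hpos x hx).ne', hx⟩
    refine lt_of_lt_of_le ?_ (measure_mono this)
    exact (isOpen_Ioo.prod isOpen_Ioo).measure_pos _
      ((Set.nonempty_Ioo.2 hpq).prod (Set.nonempty_Ioo.2 hrs))
  · filter_upwards [ae_restrict_mem (measurableSet_box p q r s)] with x hx
    exact (hpos x hx).le

lemma lt_box {g h : ℝ × ℝ → ℝ} (hg : Continuous g) (hh : Continuous h) {p q r s : ℝ}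
    (hpq : p < q) (hrs : r < s)
    (hpos : ∀ x ∈ box p q r s, g x < h x) :
    ∫ x in box p q r s, g x < ∫ x in box p q r s, h x := by
  have := pos_box (hh.sub hg) hpq hrs (fun x hx => sub_pos.2 (hpos x hx))
  rw [integral_sub' (integrableOn_box hh _ _ _ _) (integrableOn_box hg _ _ _ _)] at this
  linarith

lemma quantile (μ : Measure ℝ) [IsProbabilityMeasure μ] [NullSingletonClass μ] (p : ℝ) (hp : p ∈ Set.Ioo (0:ℝ) 1)
    (b : ℝ) (hb : b = sInf {t : ℝ | p ≤ (μ (Set.Iic t)).toReal}) : μ.real (Set.Iic b) = p := by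
  have e : {t : ℝ | p ≤ (μ (Set.Iic t)).toReal} = {t | p ≤ cdf μ t} := by
    ext t; simp [cdf_eq_real, Measure.real]
  rw [e] at hb
  have ne : {t | p ≤ cdf μ t}.Nonempty :=
    (((tendsto_cdf_atTop μ).eventually_const_lt hp.2).exists).imp fun t ht => ht.le
  have bdd : BddBelow {t | p ≤ cdf μ t} := by
    obtain ⟨t, ht⟩ := ((tendsto_cdf_atBot μ).eventually_lt_const hp.1).exists
    refine ⟨t, fun u hu => ?_⟩
    by_contra! h
    exact absurd (monotone_cdf μ h.le) (not_le.2 (lt_of_lt_of_le ht hu))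
  rw [← cdf_eq_real]
  apply le_antisymm
  · have hcont : Function.leftLim (cdf μ) b = cdf μ b := by
      have h0 : (cdf μ).measure {b} = 0 := by rw [measure_cdf]; exact measure_singleton b
      rw [StieltjesFunction.measure_singleton, ENNReal.ofReal_eq_zero] at h0
      exact le_antisymm ((monotone_cdf μ).leftLim_le le_rfl) (by linarith)
    rw [← hcont]
    refine le_of_tendsto ((monotone_cdf μ).tendsto_leftLim b) ?_
    filter_upwards [self_mem_nhdsWithin] with t ht
    by_contra! h
    exact absurd (csInf_le bdd h.le) (not_le.2 (hb ▸ ht))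
  · refine ge_of_tendsto (x := 𝓝[>] b) (((cdf μ).right_continuous b).tendsto.mono_left
      (nhdsWithin_mono _ Set.Ioi_subset_Ici_self)) ?_
    filter_upwards [self_mem_nhdsWithin] with t ht
    rw [hb] at ht
    obtain ⟨u, hu, hut⟩ := exists_lt_of_csInf_lt ne ht
    exact le_trans hu (monotone_cdf μ hut.le)

lemma law_eq (v₁ v₂ : NNReal) (h₁ : 0 < v₁) (h₂ : 0 < v₂) (θ : ℝ) :
    (volume : Measure (ℝ × ℝ)).withDensity (fun x => ENNReal.ofReal
        (gaussianPDFReal 0 v₁ (x.1 - θ) * gaussianPDFReal 0 v₂ (x.2 - θ))) =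
      (gaussianReal θ v₁).prod (gaussianReal θ v₂) := by
  rw [gaussianReal_of_var_ne_zero _ h₁.ne', gaussianReal_of_var_ne_zero _ h₂.ne',
    prod_withDensity (measurable_gaussianPDF _ _) (measurable_gaussianPDF _ _)]
  congr 1
  ext x
  simp only [gauss_shift, gaussianPDF]
  rw [ENNReal.ofReal_mul (gaussianPDFReal_nonneg _ _ _)]

lemma power_eq (v₁ v₂ : NNReal) (θ : ℝ) (f : ℝ × ℝ → ℝ) :
    ∫ x, f x ∂((volume : Measure (ℝ × ℝ)).withDensity (fun x => ENNReal.ofReal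
        (gaussianPDFReal 0 v₁ (x.1 - θ) * gaussianPDFReal 0 v₂ (x.2 - θ)))) =
      ∫ x, dens v₁ v₂ θ x * f x := by
  have hm : Measurable (fun x => ENNReal.ofReal (dens v₁ v₂ θ x)) :=
    (continuous_dens_x v₁ v₂ θ).measurable.ennreal_ofReal
  have := integral_withDensity_eq_integral_toReal_smul (μ := (volume : Measure (ℝ × ℝ))) hm
    (Eventually.of_forall fun x => ENNReal.ofReal_lt_top) f
  refine this.trans (integral_congr_ae (Eventually.of_forall fun x => ?_))
  simp [ENNReal.toReal_ofReal (dens_nonneg v₁ v₂ θ x)]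

lemma gauss_Ioi (v : NNReal) (θ a : ℝ) :
    (gaussianReal θ v).real (Set.Ioi a) = (gaussianReal 0 v).real (Set.Ioi (a - θ)) := by
  have : gaussianReal θ v = (gaussianReal 0 v).map (· + θ) := by
    rw [gaussianReal_map_add_const, zero_add]
  rw [this, map_measureReal_apply (by fun_prop) measurableSet_Ioi]
  congr 1; ext x; simp [sub_lt_iff_lt_add]

lemma gauss_Iio (v : NNReal) (θ a : ℝ) :
    (gaussianReal θ v).real (Set.Iio a) = (gaussianReal 0 v).real (Set.Iio (a - θ)) := by
  have : gaussianReal θ v = (gaussianReal 0 v).map (· + θ) := by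
    rw [gaussianReal_map_add_const, zero_add]
  rw [this, map_measureReal_apply (by fun_prop) measurableSet_Iio]
  congr 1; ext x; simp [lt_sub_iff_add_lt]

lemma Ioi_eq (μ : Measure ℝ) [IsProbabilityMeasure μ] (t : ℝ) :
    μ.real (Set.Ioi t) = 1 - μ.real (Set.Iic t) := by
  rw [← Set.compl_Iic, probReal_compl_eq_one_sub measurableSet_Iic]

lemma Iio_eq (μ : Measure ℝ) [NullSingletonClass μ] (t : ℝ) :
    μ.real (Set.Iio t) = μ.real (Set.Iic t) := measureReal_congr Iio_ae_eq_Iic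

lemma moran_power (v₁ v₂ : NNReal) (θ a b₁ b₂ : ℝ) :
    ∫ x, Set.indicator ((Set.Ioi a ×ˢ Set.Ioi b₁) ∪ (Set.Iio a ×ˢ Set.Iio b₂)) (fun _ => (1 : ℝ)) x
      ∂((gaussianReal θ v₁).prod (gaussianReal θ v₂)) =
    (gaussianReal θ v₁).real (Set.Ioi a) * (gaussianReal θ v₂).real (Set.Ioi b₁) +
    (gaussianReal θ v₁).real (Set.Iio a) * (gaussianReal θ v₂).real (Set.Iio b₂) := by
  rw [integral_indicator_const _ (by measurability), smul_eq_mul, mul_one,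
    measureReal_union _ (measurableSet_Iio.prod measurableSet_Iio), measureReal_prod_prod,
    measureReal_prod_prod]
  rw [Set.disjoint_left]
  rintro x ⟨h, -⟩ ⟨h', -⟩
  exact lt_asymm (Set.mem_Ioi.1 h) (Set.mem_Iio.1 h')

lemma setIntegral_lin (v₁ v₂ : NNReal) (p q r s m k : ℝ) :
    ∫ x in box p q r s, dens v₁ v₂ 0 x * (m + k * T v₁ v₂ x) =
      m * (∫ x in box p q r s, dens v₁ v₂ 0 x) +
      k * (∫ x in box p q r s, dens v₁ v₂ 0 x * T v₁ v₂ x) := by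
  have c1 := continuous_dens_x v₁ v₂ 0
  have c2 := continuous_T v₁ v₂
  rw [← integral_const_mul, ← integral_const_mul, ← integral_add]
  · congr 1; ext x; ring
  · exact integrableOn_box (by fun_prop) _ _ _ _
  · exact integrableOn_box (by fun_prop) _ _ _ _

lemma improve (v₁ v₂ : NNReal) (h₁ : 0 < v₁) (h₂ : 0 < v₂) (c d : ℝ) (hcd : c < d)
    (p q r s p' q' r' s' p'' q'' r'' s'' : ℝ)
    (hpq : p < q) (hrs : r < s) (hpq' : p' < q') (hrs' : r' < s') (hpq'' : p'' < q'')
    (hrs'' : r'' < s'')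
    (hA : ∀ x ∈ box p q r s, c < T v₁ v₂ x ∧ T v₁ v₂ x < d)
    (hB : ∀ x ∈ box p' q' r' s', T v₁ v₂ x < c)
    (hC : ∀ x ∈ box p'' q'' r'' s'', d < T v₁ v₂ x) :
    ∃ w t u : ℝ, w ∈ Set.Icc (0 : ℝ) 1 ∧ t ∈ Set.Icc (0 : ℝ) 1 ∧ u ∈ Set.Icc (0 : ℝ) 1 ∧
      (w * ∫ x in box p q r s, dens v₁ v₂ 0 x) = (t * ∫ x in box p' q' r' s', dens v₁ v₂ 0 x) +
        (u * ∫ x in box p'' q'' r'' s'', dens v₁ v₂ 0 x) ∧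
      ∀ θ : ℝ, θ ≠ 0 →
        (w * ∫ x in box p q r s, dens v₁ v₂ θ x) < (t * ∫ x in box p' q' r' s', dens v₁ v₂ θ x) +
        (u * ∫ x in box p'' q'' r'' s'', dens v₁ v₂ θ x) := by
  have c1 := continuous_dens_x v₁ v₂ 0
  have c2 := continuous_T v₁ v₂
  have dp := dens_pos v₁ v₂ h₁ h₂ 0
  have pA := pos_box c1 hpq hrs (fun x _ => dp x)
  have pB := pos_box c1 hpq' hrs' (fun x _ => dp x)
  have pC := pos_box c1 hpq'' hrs'' (fun x _ => dp x)
  have tA1 := lt_box (g := fun x => dens v₁ v₂ 0 x * (c + 0 * T v₁ v₂ x))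
    (h := fun x => dens v₁ v₂ 0 x * T v₁ v₂ x) (by fun_prop) (by fun_prop) hpq hrs
    (fun x hx => mul_lt_mul_of_pos_left (by linarith [(hA x hx).1]) (dp x))
  have tA2 := lt_box (h := fun x => dens v₁ v₂ 0 x * (d + 0 * T v₁ v₂ x))
    (g := fun x => dens v₁ v₂ 0 x * T v₁ v₂ x) (by fun_prop) (by fun_prop) hpq hrs
    (fun x hx => mul_lt_mul_of_pos_left (by linarith [(hA x hx).2]) (dp x))
  have tB := lt_box (h := fun x => dens v₁ v₂ 0 x * (c + 0 * T v₁ v₂ x))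
    (g := fun x => dens v₁ v₂ 0 x * T v₁ v₂ x) (by fun_prop) (by fun_prop) hpq' hrs'
    (fun x hx => mul_lt_mul_of_pos_left (by linarith [(hB x hx)]) (dp x))
  have tC := lt_box (g := fun x => dens v₁ v₂ 0 x * (d + 0 * T v₁ v₂ x))
    (h := fun x => dens v₁ v₂ 0 x * T v₁ v₂ x) (by fun_prop) (by fun_prop) hpq'' hrs''
    (fun x hx => mul_lt_mul_of_pos_left (by linarith [(hC x hx)]) (dp x))
  rw [setIntegral_lin] at tA1 tA2 tB tC
  have hA3 : ∀ θ : ℝ, θ ≠ 0 → ∃ m k : ℝ,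
      ((∫ x in box p q r s, dens v₁ v₂ 0 x * Real.exp (θ * T v₁ v₂ x)) <
        m * (∫ x in box p q r s, dens v₁ v₂ 0 x) +
        k * (∫ x in box p q r s, dens v₁ v₂ 0 x * T v₁ v₂ x)) ∧
      (m * (∫ x in box p' q' r' s', dens v₁ v₂ 0 x) +
        k * (∫ x in box p' q' r' s', dens v₁ v₂ 0 x * T v₁ v₂ x) ≤
        (∫ x in box p' q' r' s', dens v₁ v₂ 0 x * Real.exp (θ * T v₁ v₂ x))) ∧
      (m * (∫ x in box p'' q'' r'' s'', dens v₁ v₂ 0 x) +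
        k * (∫ x in box p'' q'' r'' s'', dens v₁ v₂ 0 x * T v₁ v₂ x) ≤
        (∫ x in box p'' q'' r'' s'', dens v₁ v₂ 0 x * Real.exp (θ * T v₁ v₂ x))) := by
    intro θ hθ
    obtain ⟨m, k, e1, e2, e3⟩ := chord θ hθ c d hcd
    refine ⟨m, k, ?_, ?_, ?_⟩
    · rw [← setIntegral_lin]
      exact lt_box (by fun_prop) (by fun_prop) hpq hrs fun x hx =>
        mul_lt_mul_of_pos_left (e1 _ (hA x hx).1 (hA x hx).2) (dp x)
    · rw [← setIntegral_lin]
      exact setIntegral_mono_on (integrableOn_box (by fun_prop) _ _ _ _)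
        (integrableOn_box (by fun_prop) _ _ _ _) (measurableSet_box _ _ _ _) fun x hx =>
        mul_le_mul_of_nonneg_left (e2 _ (hB x hx).le) (dp x).le
    · rw [← setIntegral_lin]
      exact setIntegral_mono_on (integrableOn_box (by fun_prop) _ _ _ _)
        (integrableOn_box (by fun_prop) _ _ _ _) (measurableSet_box _ _ _ _) fun x hx =>
        mul_le_mul_of_nonneg_left (e3 _ (hC x hx).le) (dp x).le
  have tilt : ∀ θ : ℝ, ∀ S : Set (ℝ × ℝ), ∫ x in S, dens v₁ v₂ θ x =
      Real.exp (-(θ ^ 2 / (2 * v₁)) + -(θ ^ 2 / (2 * v₂))) *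
        ∫ x in S, dens v₁ v₂ 0 x * Real.exp (θ * T v₁ v₂ x) := by
    intro θ S
    rw [← integral_const_mul]
    congr 1; ext x; exact dens_tilt v₁ v₂ h₁ h₂ θ x
  generalize (∫ x in box p q r s, dens v₁ v₂ 0 x * T v₁ v₂ x) = TA at *
  generalize (∫ x in box p' q' r' s', dens v₁ v₂ 0 x * T v₁ v₂ x) = TB at *
  generalize (∫ x in box p'' q'' r'' s'', dens v₁ v₂ 0 x * T v₁ v₂ x) = TC at *
  generalize hPA : (∫ x in box p q r s, dens v₁ v₂ 0 x) = PA at *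
  generalize hPB : (∫ x in box p' q' r' s', dens v₁ v₂ 0 x) = PB at *
  generalize hPC : (∫ x in box p'' q'' r'' s'', dens v₁ v₂ 0 x) = PC at *
  have x1 : c * PA < TA := by linarith
  have x2 : TA < d * PA := by linarith
  have x3 : TB < c * PB := by linarith
  have x4 : d * PC < TC := by linarith
  have D0 : 0 < PB * TC - PC * TB := by
    nlinarith [mul_lt_mul_of_pos_left x3 pC, mul_lt_mul_of_pos_left x4 pB,
      mul_pos (mul_pos pB pC) (sub_pos.2 hcd)]
  have D1 : 0 < PA * TC - PC * TA := by
    nlinarith [mul_lt_mul_of_pos_left x2 pC, mul_lt_mul_of_pos_left x4 pA]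
  have D2 : 0 < PB * TA - PA * TB := by
    nlinarith [mul_lt_mul_of_pos_left x3 pA, mul_lt_mul_of_pos_left x1 pB]
  obtain ⟨D, hD⟩ : ∃ D, D = (PB * TC - PC * TB) + (PA * TC - PC * TA) + (PB * TA - PA * TB) :=
    ⟨_, rfl⟩
  have hDp : 0 < D := by linarith
  have hmom0 : (PB * TC - PC * TB) / D * PA =
      (PA * TC - PC * TA) / D * PB + (PB * TA - PA * TB) / D * PC := by
    field_simp; ring
  have hmom1 : (PB * TC - PC * TB) / D * TA =
      (PA * TC - PC * TA) / D * TB + (PB * TA - PA * TB) / D * TC := by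
    field_simp; ring
  have w0 : 0 < (PB * TC - PC * TB) / D := by positivity
  have t0 : 0 < (PA * TC - PC * TA) / D := by positivity
  have u0 : 0 < (PB * TA - PA * TB) / D := by positivity
  have w1 : (PB * TC - PC * TB) / D ≤ 1 := by rw [div_le_one hDp]; linarith
  have t1 : (PA * TC - PC * TA) / D ≤ 1 := by rw [div_le_one hDp]; linarith
  have u1 : (PB * TA - PA * TB) / D ≤ 1 := by rw [div_le_one hDp]; linarith
  refine ⟨_, _, _, ⟨w0.le, w1⟩, ⟨t0.le, t1⟩, ⟨u0.le, u1⟩, hmom0, ?_⟩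
  intro θ hθ
  obtain ⟨m, k, e1, e2, e3⟩ := hA3 θ hθ
  rw [tilt, tilt θ (box p' q' r' s'), tilt θ (box p'' q'' r'' s'')]
  have := mul_lt_mul_of_pos_left e1 w0
  have := mul_le_mul_of_nonneg_left e2 t0.le
  have := mul_le_mul_of_nonneg_left e3 u0.le
  have hm := congrArg (m * ·) hmom0
  have hk := congrArg (k * ·) hmom1
  beta_reduce at hm hk
  rw [mul_left_comm, mul_left_comm _ (Real.exp _), mul_left_comm _ (Real.exp _), ← mul_add]
  refine mul_lt_mul_of_pos_left ?_ (Real.exp_pos _)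
  linarith

lemma moran_vanish (v₁ v₂ : NNReal) (h₁ : 0 < v₁) (h₂ : 0 < v₂) (a b₁ b₂ : ℝ) (ε : ℝ) (hε : 0 < ε) :
    ∀ᶠ θ in cocompact ℝ, 1 -
    ((gaussianReal θ v₁).real (Set.Ioi a) * (gaussianReal θ v₂).real (Set.Ioi b₁) +
    (gaussianReal θ v₁).real (Set.Iio a) * (gaussianReal θ v₂).real (Set.Iio b₂)) < ε := by
  have := nullSingletonClass_gaussianReal (μ := 0) h₁.ne'
  have := nullSingletonClass_gaussianReal (μ := 0) h₂.ne'
  have top : ∀ (v : NNReal) (b : ℝ),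
      Tendsto (fun θ => (gaussianReal θ v).real (Set.Ioi b)) atTop (𝓝 1) := by
    intro v b
    rw [funext fun θ => gauss_Ioi v θ b]
    simp only [Ioi_eq, ← cdf_eq_real]
    have h := (tendsto_cdf_atBot (gaussianReal 0 v)).comp
      (tendsto_atBot_add_const_left atTop b tendsto_neg_atTop_atBot)
    simpa [sub_eq_add_neg] using h.const_sub 1
  have bot : ∀ (v : NNReal) (b : ℝ), 0 < v →
      Tendsto (fun θ => (gaussianReal θ v).real (Set.Iio b)) atBot (𝓝 1) := by
    intro v b hv
    have := nullSingletonClass_gaussianReal (μ := 0) hv.ne'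
    rw [funext fun θ => gauss_Iio v θ b]
    simp only [Iio_eq, ← cdf_eq_real]
    have h := (tendsto_cdf_atTop (gaussianReal 0 v)).comp
      (tendsto_atTop_add_const_left atBot b tendsto_neg_atBot_atTop)
    simpa [sub_eq_add_neg, Function.comp_def] using h
  rw [cocompact_eq_atBot_atTop, eventually_sup]
  constructor
  · have h := (bot v₁ a h₁).mul (bot v₂ b₂ h₂)
    filter_upwards [h.eventually_const_lt (show 1 - ε < 1 * 1 by linarith)] with θ hθ
    have : 0 ≤ (gaussianReal θ v₁).real (Set.Ioi a) * (gaussianReal θ v₂).real (Set.Ioi b₁) := by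
      positivity
    linarith
  · have h := (top v₁ a).mul (top v₂ b₁)
    filter_upwards [h.eventually_const_lt (show 1 - ε < 1 * 1 by linarith)] with θ hθ
    have : 0 ≤ (gaussianReal θ v₁).real (Set.Iio a) * (gaussianReal θ v₂).real (Set.Iio b₂) := by
      positivity
    linarith

end Moran

/- STATEMENT 14: In the one-dimensional Gaussian case (U₁ ~ N(0,σ₁²), U₂ ~ N(0,σ₂²)
independent), Moran's test φ is a regular test of level α that is inadmissible among
regular tests: φ ∈ Φ₀(α) \ A₀(α). -/
theorem stmt_14
    (v₁ v₂ : NNReal) (hv₁ : 0 < v₁) (hv₂ : 0 < v₂)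
    -- P θ is the law of (U₁ + θ, U₂ + θ)
    (P : ℝ → Measure (ℝ × ℝ))
    (hP : P = fun θ => (volume : Measure (ℝ × ℝ)).withDensity
      (fun x => ENNReal.ofReal
        (gaussianPDFReal 0 v₁ (x.1 - θ) * gaussianPDFReal 0 v₂ (x.2 - θ))))
    (α : ℝ) (hα : α ∈ Set.Ioo (0 : ℝ) 1)
    -- b₁ and b₂ are the (1−α)-quantile and α-quantile of N(0, σ₂²)
    (b₁ b₂ : ℝ)
    (hb₁ : b₁ = sInf {t : ℝ | 1 - α ≤ (gaussianReal 0 v₂ (Set.Iic t)).toReal})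
    (hb₂ : b₂ = sInf {t : ℝ | α ≤ (gaussianReal 0 v₂ (Set.Iic t)).toReal})
    (a : ℝ)
    -- power of an arbitrary test and Moran's test φ
    (β : (ℝ × ℝ → ℝ) → ℝ → ℝ) (hβ : β = fun φ' θ => ∫ x, φ' x ∂(P θ))
    (φ : ℝ × ℝ → ℝ)
    (hφ : φ = Set.indicator
      ((Set.Ioi a ×ˢ Set.Ioi b₁) ∪ (Set.Iio a ×ˢ Set.Iio b₂)) (fun _ => (1 : ℝ)))
    -- the class Φ₀(α) of regular tests of level α
    (Φ₀ : Set (ℝ × ℝ → ℝ))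
    (hΦ₀ : Φ₀ = {φ' : ℝ × ℝ → ℝ | Measurable φ' ∧ (∀ x, φ' x ∈ Set.Icc (0 : ℝ) 1) ∧
      β φ' 0 = α ∧ Continuous (fun θ : ℝ => 1 - β φ' θ) ∧
      ∀ ε : ℝ, 0 < ε → ∃ K : Set ℝ, IsCompact K ∧ {θ : ℝ | ε ≤ 1 - β φ' θ} ⊆ K}) :
    -- conclusion: φ ∈ Φ₀(α) \ A₀(α)
    φ ∈ Φ₀ ∧ ∃ φ' ∈ Φ₀,
      (∀ θ : ℝ, θ ≠ 0 → β φ θ ≤ β φ' θ) ∧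
      (∃ θ : ℝ, θ ≠ 0 ∧ β φ θ < β φ' θ) := by
  classical
  have hβ' : ∀ f θ, β f θ = ∫ x, Moran.dens v₁ v₂ θ x * f x := by
    intro f θ
    rw [hβ, hP]
    exact Moran.power_eq v₁ v₂ θ f
  have hβφ : ∀ θ, β φ θ = (gaussianReal θ v₁).real (Set.Ioi a) * (gaussianReal θ v₂).real (Set.Ioi b₁) +
      (gaussianReal θ v₁).real (Set.Iio a) * (gaussianReal θ v₂).real (Set.Iio b₂) := by
    intro θ
    rw [hβ, hP, hφ]
    beta_reduce
    rw [Moran.law_eq v₁ v₂ hv₁ hv₂ θ]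
    exact Moran.moran_power v₁ v₂ θ a b₁ b₂
  have hcont : ∀ f, Measurable f → (∀ x, f x ∈ Set.Icc (0 : ℝ) 1) →
      Continuous (fun θ : ℝ => 1 - β f θ) := by
    intro f hf hb
    simp only [hβ']
    exact continuous_const.sub (Moran.continuous_power v₁ v₂ hv₁ hv₂ f hf hb)
  have hφm : Measurable φ := by
    rw [hφ]
    exact measurable_const.indicator ((measurableSet_Ioi.prod measurableSet_Ioi).union
      (measurableSet_Iio.prod measurableSet_Iio))
  have hφb : ∀ x, φ x ∈ Set.Icc (0 : ℝ) 1 := by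
    intro x
    rw [hφ]
    by_cases hx : x ∈ (Set.Ioi a ×ˢ Set.Ioi b₁) ∪ (Set.Iio a ×ˢ Set.Iio b₂)
    · rw [Set.indicator_of_mem hx]; simp
    · rw [Set.indicator_of_notMem hx]; simp
  have hlevel : β φ 0 = α := by
    have i1 := nullSingletonClass_gaussianReal (μ := 0) hv₁.ne'
    have i2 := nullSingletonClass_gaussianReal (μ := 0) hv₂.ne'
    rw [hβφ, Moran.Ioi_eq, Moran.Ioi_eq, Moran.Iio_eq, Moran.Iio_eq,
      Moran.quantile (gaussianReal 0 v₂) (1 - α) ⟨by linarith [hα.2], by linarith [hα.1]⟩ b₁ hb₁,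
      Moran.quantile (gaussianReal 0 v₂) α hα b₂ hb₂]
    ring
  have hvan : ∀ ε : ℝ, 0 < ε → ∃ K : Set ℝ, IsCompact K ∧ {θ : ℝ | ε ≤ 1 - β φ θ} ⊆ K := by
    intro ε hε
    have h := Moran.moran_vanish v₁ v₂ hv₁ hv₂ a b₁ b₂ ε hε
    obtain ⟨K, hK, hKs⟩ := Filter.mem_cocompact.1 h
    refine ⟨K, hK, fun θ hθ => ?_⟩
    by_contra hn
    have h1 := hKs hn
    simp only [Set.mem_ofPred_eq] at h1 hθ
    rw [hβφ] at hθ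
    linarith
  have hφmem : φ ∈ Φ₀ := by
    rw [hΦ₀]
    exact ⟨hφm, hφb, hlevel, hcont φ hφm hφb, hvan⟩
  refine ⟨hφmem, ?_⟩
  have p1 : (0 : ℝ) < v₁ := by exact_mod_cast hv₁
  have p2 : (0 : ℝ) < v₂ := by exact_mod_cast hv₂
  have e12 : (v₂ / v₁ : ℝ) / v₂ = 1 / v₁ := by field_simp
  have e21 : (2 * v₁ / v₂ : ℝ) / v₁ = 2 / v₂ := by field_simp
  have q1 : (0 : ℝ) < 1 / v₁ := by positivity
  have q2 : (0 : ℝ) < 1 / v₂ := by positivity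
  have r12 : (0 : ℝ) < v₂ / v₁ := by positivity
  have r21 : (0 : ℝ) < 2 * v₁ / v₂ := by positivity
  obtain ⟨w, t, u, hw, ht, hu, hz, hlt⟩ := Moran.improve v₁ v₂ hv₁ hv₂
    (a / v₁ + b₁ / v₂) ((a + 1) / v₁ + (b₁ + 1) / v₂)
    (by rw [add_div, add_div]; linarith)
    a (a + 1) b₁ (b₁ + 1)
    a (a + 1) (b₁ - v₂ / v₁ - 1) (b₁ - v₂ / v₁)
    (a + 1 + 2 * v₁ / v₂) (a + 1 + 2 * v₁ / v₂ + 1) (b₁ - 1) b₁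
    (by linarith) (by linarith) (by linarith) (by linarith) (by linarith) (by linarith)
    (by
      rintro x ⟨⟨h1, h2⟩, ⟨h3, h4⟩⟩
      exact ⟨add_lt_add (div_lt_div_of_pos_right h1 p1) (div_lt_div_of_pos_right h3 p2),
        add_lt_add (div_lt_div_of_pos_right h2 p1) (div_lt_div_of_pos_right h4 p2)⟩)
    (by
      rintro x ⟨⟨h1, h2⟩, ⟨h3, h4⟩⟩
      have := add_lt_add (div_lt_div_of_pos_right h2 p1) (div_lt_div_of_pos_right h4 p2)
      rw [add_div, sub_div, e12] at this
      unfold Moran.T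
      linarith)
    (by
      rintro x ⟨⟨h1, h2⟩, ⟨h3, h4⟩⟩
      have := add_lt_add (div_lt_div_of_pos_right h1 p1) (div_lt_div_of_pos_right h3 p2)
      rw [add_div (a + 1), sub_div, e21] at this
      have e : (2 : ℝ) / v₂ = 1 / v₂ + 1 / v₂ := by ring
      rw [add_div b₁]
      unfold Moran.T
      linarith)
  obtain ⟨A, hA⟩ : ∃ A, A = Moran.box a (a + 1) b₁ (b₁ + 1) := ⟨_, rfl⟩
  obtain ⟨B, hB⟩ : ∃ B, B = Moran.box a (a + 1) (b₁ - v₂ / v₁ - 1) (b₁ - v₂ / v₁) := ⟨_, rfl⟩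
  obtain ⟨C, hC⟩ : ∃ C, C = Moran.box (a + 1 + 2 * v₁ / v₂) (a + 1 + 2 * v₁ / v₂ + 1) (b₁ - 1) b₁ :=
    ⟨_, rfl⟩
  have mA : MeasurableSet A := hA ▸ Moran.measurableSet_box _ _ _ _
  have mB : MeasurableSet B := hB ▸ Moran.measurableSet_box _ _ _ _
  have mC : MeasurableSet C := hC ▸ Moran.measurableSet_box _ _ _ _
  rw [← hA, ← hB, ← hC] at hz
  simp only [← hA, ← hB, ← hC] at hlt
  have φA : ∀ x ∈ A, φ x = 1 := by
    intro x hx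
    rw [hA] at hx
    rw [hφ, Set.indicator_of_mem]
    exact Or.inl ⟨hx.1.1, hx.2.1⟩
  have φ0 : ∀ x : ℝ × ℝ, a < x.1 → x.2 < b₁ → φ x = 0 := by
    intro x h1 h2
    rw [hφ, Set.indicator_of_notMem]
    rintro (⟨-, h⟩ | ⟨h, -⟩)
    · exact lt_asymm h2 (Set.mem_Ioi.1 h)
    · exact lt_asymm h1 (Set.mem_Iio.1 h)
  have φB : ∀ x ∈ B, φ x = 0 := by
    intro x hx
    rw [hB] at hx
    exact φ0 x hx.1.1 (by have := hx.2.2; linarith)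
  have φC : ∀ x ∈ C, φ x = 0 := by
    intro x hx
    rw [hC] at hx
    exact φ0 x (by have := hx.1.1; linarith) hx.2.2
  have dBC : ∀ x ∈ B, x ∉ C := by
    intro x hx hx'
    rw [hB] at hx
    rw [hC] at hx'
    have := hx.1.2
    have := hx'.1.1
    linarith
  obtain ⟨ψ, hψ⟩ : ∃ ψ : ℝ × ℝ → ℝ, ψ = fun x => φ x - A.indicator (fun _ => w) x +
      B.indicator (fun _ => t) x + C.indicator (fun _ => u) x := ⟨_, rfl⟩
  have hψm : Measurable ψ := by
    rw [hψ]
    exact ((hφm.sub (measurable_const.indicator mA)).add (measurable_const.indicator mB)).add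
      (measurable_const.indicator mC)
  have hψb : ∀ x, ψ x ∈ Set.Icc (0 : ℝ) 1 := by
    intro x
    have hb := hφb x
    have a1 := φA x
    have b1 := φB x
    have c1 := φC x
    have bc := dBC x
    simp only [hψ, Set.indicator_apply, Set.mem_Icc] at *
    by_cases xA : x ∈ A
    · have xB : x ∉ B := fun h => by have := a1 xA; have := b1 h; linarith
      have xC : x ∉ C := fun h => by have := a1 xA; have := c1 h; linarith
      simp only [xA, xB, xC, if_true, if_false, a1 xA]
      constructor <;> linarith
    · by_cases xB : x ∈ B
      · have xC := bc xB
        simp only [xA, xB, xC, if_true, if_false, b1 xB]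
        constructor <;> linarith
      · by_cases xC : x ∈ C
        · simp only [xA, xB, xC, if_true, if_false, c1 xC]
          constructor <;> linarith
        · simp only [xA, xB, xC, if_false]
          constructor <;> linarith
  have hβψ : ∀ θ, β ψ θ = β φ θ - w * (∫ x in A, Moran.dens v₁ v₂ θ x) +
      t * (∫ x in B, Moran.dens v₁ v₂ θ x) + u * (∫ x in C, Moran.dens v₁ v₂ θ x) := by
    intro θ
    have hd := Moran.integrable_dens v₁ v₂ θ
    have hdφ : Integrable (fun x => Moran.dens v₁ v₂ θ x * φ x) :=
      hd.mul_bdd (c := 1) hφm.aestronglyMeasurable (Filter.Eventually.of_forall fun x => by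
        rw [Real.norm_of_nonneg (hφb x).1]; exact (hφb x).2)
    have hi : ∀ S : Set (ℝ × ℝ), MeasurableSet S → ∀ k : ℝ,
        Integrable (fun x => k * S.indicator (Moran.dens v₁ v₂ θ) x) :=
      fun S hS k => (hd.indicator hS).const_mul k
    have hI : ∀ S : Set (ℝ × ℝ), MeasurableSet S → ∀ k : ℝ,
        k * ∫ x in S, Moran.dens v₁ v₂ θ x = ∫ x, k * S.indicator (Moran.dens v₁ v₂ θ) x := by
      intro S hS k
      rw [integral_const_mul, integral_indicator hS]
    rw [hβ', hβ', hI A mA, hI B mB, hI C mC, ← integral_sub' hdφ (hi A mA w),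
      ← integral_add' (hdφ.sub (hi A mA w)) (hi B mB t),
      ← integral_add' ((hdφ.sub (hi A mA w)).add (hi B mB t)) (hi C mC u)]
    congr 1
    ext x
    simp only [hψ, Pi.add_apply, Pi.sub_apply, Set.indicator_apply]
    split_ifs <;> ring
  have hgt : ∀ θ, θ ≠ 0 → β φ θ < β ψ θ := by
    intro θ hθ
    rw [hβψ]
    linarith [hlt θ hθ]
  refine ⟨ψ, ?_, fun θ hθ => (hgt θ hθ).le, 1, one_ne_zero, hgt 1 one_ne_zero⟩
  rw [hΦ₀]
  refine ⟨hψm, hψb, ?_, hcont ψ hψm hψb, ?_⟩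
  · rw [hβψ, hlevel]
    linarith
  · intro ε hε
    obtain ⟨K, hK, hKs⟩ := hvan ε hε
    refine ⟨insert 0 K, hK.insert 0, fun θ hθ => ?_⟩
    by_cases h0 : θ = 0
    · exact Or.inl h0
    · refine Or.inr (hKs ?_)
      have := hgt θ h0
      simp only [Set.mem_ofPred_eq] at hθ ⊢
      linarith
end

section
/- Moran's multi-dimensional Gaussian test φ is a regular test of level α: β_φ(0) = α, the map θ ↦ β_φ(θ) is continuous on ℝ^d, and β_φ(θ) → 1 as ‖θ‖ → ∞; that is, φ ∈ Φ₀(α). -/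
open MeasureTheory ProbabilityTheory Filter
open scoped RealInnerProductSpace

lemma stdG_eq (d : ℕ) : stdGaussian (EuclideanSpace ℝ (Fin d)) =
    (volume : Measure (EuclideanSpace ℝ (Fin d))).withDensity
      (fun x => ENNReal.ofReal ((2 * Real.pi) ^ (-((d : ℝ) / 2)) * Real.exp (-(‖x‖ ^ 2) / 2))) := by
  have hpos : (0 : ℝ) < 2 * Real.pi := by positivity
  have hint : Integrable (fun x : EuclideanSpace ℝ (Fin d) =>
      (2 * Real.pi) ^ (-((d : ℝ) / 2)) * Real.exp (-(‖x‖ ^ 2) / 2)) := by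
    apply Integrable.const_mul
    have h := (GaussianFourier.integrable_cexp_neg_mul_sq_norm_add (b := 1/2)
      (by norm_num) 0 (0 : EuclideanSpace ℝ (Fin d))).norm
    refine h.congr (Eventually.of_forall fun x => ?_)
    simp only [Complex.norm_exp]
    congr 1
    simp [← Complex.ofReal_pow]
    ring
  have : IsFiniteMeasure ((volume : Measure (EuclideanSpace ℝ (Fin d))).withDensity
      (fun x => ENNReal.ofReal ((2 * Real.pi) ^ (-((d : ℝ) / 2)) * Real.exp (-(‖x‖ ^ 2) / 2)))) :=
    isFiniteMeasure_withDensity_ofReal hint.2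
  apply Measure.ext_of_charFun
  ext t
  rw [charFun_stdGaussian, charFun_apply,
    integral_withDensity_eq_integral_toReal_smul (by fun_prop) (by simp)]
  have h := GaussianFourier.integral_cexp_neg_mul_sq_norm_add (b := 1/2)
      (by norm_num) Complex.I t
  have e : ∀ x : EuclideanSpace ℝ (Fin d),
      (ENNReal.ofReal ((2 * Real.pi) ^ (-((d : ℝ) / 2)) * Real.exp (-(‖x‖ ^ 2) / 2))).toReal •
        Complex.exp (↑(inner ℝ x t) * Complex.I) =
      (((2 * Real.pi) ^ (-((d : ℝ) / 2)) : ℝ) : ℂ) *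
        Complex.exp (-(1/2) * ↑‖x‖ ^ 2 + Complex.I * ↑(inner ℝ t x)) := by
    intro x
    rw [ENNReal.toReal_ofReal (by positivity), Complex.exp_add, real_inner_comm, Complex.real_smul]
    push_cast
    rw [mul_assoc]
    congr 2
    · congr 1; ring
    · ring_nf
  simp_rw [e]
  rw [integral_const_mul, h, ← mul_assoc]
  have c : (((2 * Real.pi) ^ (-((d : ℝ) / 2)) : ℝ) : ℂ) *
      ((Real.pi : ℂ) / (1/2)) ^ ((Module.finrank ℝ (EuclideanSpace ℝ (Fin d)) : ℂ) / 2) = 1 := by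
    have : ((Real.pi : ℂ) / (1/2)) ^ ((Module.finrank ℝ (EuclideanSpace ℝ (Fin d)) : ℂ) / 2)
        = (((2 * Real.pi) ^ ((d : ℝ) / 2) : ℝ) : ℂ) := by
      rw [Complex.ofReal_cpow hpos.le]
      simp
      congr 1; ring
    rw [this, ← Complex.ofReal_mul, ← Real.rpow_add hpos]
    simp
  rw [c, one_mul]
  congr 1
  rw [Complex.I_sq]
  ring

lemma stdG_map_unit {d : ℕ} (v : EuclideanSpace ℝ (Fin d)) (hv : ‖v‖ = 1) :
    (stdGaussian (EuclideanSpace ℝ (Fin d))).map (fun x => ⟪v, x⟫) = gaussianReal 0 1 := by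
  have h := IsGaussian.map_eq_gaussianReal (μ := stdGaussian (EuclideanSpace ℝ (Fin d))) (innerSL ℝ v)
  rw [integral_strongDual_stdGaussian, variance_dual_stdGaussian, innerSL_apply_norm, hv] at h
  simpa using h

lemma stdG_apply {d : ℕ} (v : EuclideanSpace ℝ (Fin d)) (hv : v ≠ 0) (s : Set ℝ)
    (hs : MeasurableSet s) :
    stdGaussian (EuclideanSpace ℝ (Fin d)) {x | ⟪v, x⟫ / ‖v‖ ∈ s} = gaussianReal 0 1 s := by
  have hv' : ‖v‖ ≠ 0 := norm_ne_zero_iff.2 hv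
  rw [← stdG_map_unit (‖v‖⁻¹ • v) (by rw [norm_smul]; simp [hv']),
    Measure.map_apply (by fun_prop) hs]
  congr 1
  ext x
  simp [real_inner_smul_left, div_eq_inv_mul]

lemma stdG_ae_ne {d : ℕ} (hd : 1 ≤ d) (a : EuclideanSpace ℝ (Fin d)) :
    ∀ᵐ x ∂(stdGaussian (EuclideanSpace ℝ (Fin d))), x ≠ a := by
  have : Nonempty (Fin d) := ⟨⟨0, hd⟩⟩
  rw [stdG_eq]
  apply (withDensity_absolutelyContinuous _ _).ae_le
  exact Measure.ae_ne _ _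

/-- The rejection zone. -/
def rejZ (d : ℕ) (D : ℝ) : Set (EuclideanSpace ℝ (Fin d) × EuclideanSpace ℝ (Fin d)) :=
  {x | x.1 ≠ 0 ∧ D < ⟪x.1, x.2⟫ / ‖x.1‖}

lemma rejZ_meas (d : ℕ) (D : ℝ) : MeasurableSet (rejZ d D) := by
  apply MeasurableSet.inter
  · exact (measurableSet_eq_fun measurable_fst measurable_const).compl
  · exact measurableSet_lt (f := fun _ => D)
      (g := fun x : EuclideanSpace ℝ (Fin d) × EuclideanSpace ℝ (Fin d) => ⟪x.1, x.2⟫ / ‖x.1‖)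
      measurable_const (by fun_prop)

lemma P_apply {d : ℕ} (θ : EuclideanSpace ℝ (Fin d))
    (S : Set (EuclideanSpace ℝ (Fin d) × EuclideanSpace ℝ (Fin d))) (hS : MeasurableSet S) :
    (volume : Measure (EuclideanSpace ℝ (Fin d) × EuclideanSpace ℝ (Fin d))).withDensity
        (fun x => ENNReal.ofReal ((2 * Real.pi) ^ (-(d : ℝ)) *
          Real.exp (-(‖x.1 - θ‖ ^ 2 + ‖x.2 - θ‖ ^ 2) / 2))) S =
    ((stdGaussian (EuclideanSpace ℝ (Fin d))).prod (stdGaussian (EuclideanSpace ℝ (Fin d))))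
      ((fun x => x + (θ, θ)) ⁻¹' S) := by
  have hpos : (0 : ℝ) < 2 * Real.pi := by positivity
  have hinv : (volume : Measure (EuclideanSpace ℝ (Fin d) × EuclideanSpace ℝ (Fin d))).IsAddRightInvariant :=
    inferInstanceAs (((volume : Measure (EuclideanSpace ℝ (Fin d))).prod
      (volume : Measure (EuclideanSpace ℝ (Fin d)))).IsAddRightInvariant)
  have hS' : MeasurableSet ((fun x => x + (θ, θ)) ⁻¹' S) := by
    apply measurableSet_preimage _ hS
    fun_prop
  rw [stdG_eq, prod_withDensity (by fun_prop) (by fun_prop), withDensity_apply _ hS,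
    withDensity_apply _ hS', ← lintegral_indicator hS, ← lintegral_indicator hS',
    ← lintegral_add_right_eq_self _ (θ, θ)]
  apply lintegral_congr
  intro x
  by_cases hx : x + (θ, θ) ∈ S
  · rw [Set.indicator_of_mem hx, Set.indicator_of_mem (show x ∈ (fun x => x + (θ, θ)) ⁻¹' S from hx),
      ← ENNReal.ofReal_mul (by positivity)]
    congr 1
    rw [mul_mul_mul_comm, ← Real.rpow_add hpos, ← Real.exp_add]
    congr 2
    · ring
    · simp; ring
  · rw [Set.indicator_of_notMem hx, Set.indicator_of_notMem (show x ∉ (fun x => x + (θ, θ)) ⁻¹' S from hx)]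

lemma ae_boundary {d : ℕ} (hd : 1 ≤ d) (D : ℝ) (θ : EuclideanSpace ℝ (Fin d)) :
    ∀ᵐ u ∂((stdGaussian (EuclideanSpace ℝ (Fin d))).prod (stdGaussian (EuclideanSpace ℝ (Fin d)))),
      u.1 + θ ≠ 0 ∧ ⟪u.1 + θ, u.2 + θ⟫ / ‖u.1 + θ‖ ≠ D := by
  have hm : MeasurableSet {u : EuclideanSpace ℝ (Fin d) × EuclideanSpace ℝ (Fin d) |
      u.1 + θ ≠ 0 ∧ ⟪u.1 + θ, u.2 + θ⟫ / ‖u.1 + θ‖ ≠ D} := by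
    apply MeasurableSet.inter
    · exact (measurableSet_eq_fun (by fun_prop) measurable_const).compl
    · exact (measurableSet_eq_fun (by fun_prop) measurable_const).compl
  rw [Measure.ae_prod_iff_ae_ae hm]
  filter_upwards [stdG_ae_ne hd (-θ)] with x hx
  have hx' : x + θ ≠ 0 := fun h => hx (eq_neg_of_add_eq_zero_left h)
  have h := stdG_apply (x + θ) hx' {D - ⟪x + θ, θ⟫ / ‖x + θ‖} (by simp)
  have := nullSingletonClass_gaussianReal (μ := 0) (v := 1) (by simp)
  rw [measure_singleton] at h
  rw [ae_iff]
  convert h using 2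
  ext y
  simp only [ne_eq, hx', not_false_eq_true, true_and, not_not, Set.mem_ofPred_eq,
    Set.mem_singleton_iff, inner_add_right (x + θ) y θ, add_div, eq_sub_iff_add_eq]

/- STATEMENT 15: Moran's multi-dimensional Gaussian test φ is a regular test of level
α: β_φ(0) = α, θ ↦ β_φ(θ) is continuous on ℝ^d, and β_φ(θ) → 1 as ‖θ‖ → ∞; that is,
φ ∈ Φ₀(α). -/
theorem stmt_15
    (d : ℕ) (hd : 1 ≤ d)
    -- P θ is the law of (U₁ + θ, U₂ + θ) for U₁, U₂ i.i.d. standard Gaussians in ℝ^d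
    (P : EuclideanSpace ℝ (Fin d) → Measure (EuclideanSpace ℝ (Fin d) × EuclideanSpace ℝ (Fin d)))
    (hP : P = fun θ =>
      (volume : Measure (EuclideanSpace ℝ (Fin d) × EuclideanSpace ℝ (Fin d))).withDensity
        (fun x => ENNReal.ofReal ((2 * Real.pi) ^ (-(d : ℝ)) *
          Real.exp (-(‖x.1 - θ‖ ^ 2 + ‖x.2 - θ‖ ^ 2) / 2))))
    (α : ℝ) (hα : α ∈ Set.Ioo (0 : ℝ) 1)
    -- D is the upper α-quantile of the standard one-dimensional Gaussian
    (D : ℝ) (hD : (gaussianReal 0 1 (Set.Ioi D)).toReal = α)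
    -- β is the power function of Moran's test, the indicator of the rejection zone
    (β : EuclideanSpace ℝ (Fin d) → ℝ)
    (hβ : β = fun θ => ((P θ)
      {x : EuclideanSpace ℝ (Fin d) × EuclideanSpace ℝ (Fin d) |
        x.1 ≠ 0 ∧ D < ⟪x.1, x.2⟫ / ‖x.1‖}).toReal) :
    β 0 = α ∧ Continuous β ∧
      (∀ ε : ℝ, 0 < ε → ∃ R : ℝ, ∀ θ, R < ‖θ‖ → 1 - ε < β θ) ∧
      (∀ ε : ℝ, 0 < ε → ∃ K : Set (EuclideanSpace ℝ (Fin d)), IsCompact K ∧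
        {θ : EuclideanSpace ℝ (Fin d) | ε ≤ 1 - β θ} ⊆ K) := by
  have hS := rejZ_meas d D
  set γ := stdGaussian (EuclideanSpace ℝ (Fin d)) with hγ
  have hβ1 : ∀ θ, β θ = ((γ.prod γ) ((fun x => x + (θ, θ)) ⁻¹' rejZ d D)).toReal := by
    intro θ
    rw [hβ, hP, hγ, ← P_apply θ _ hS]
    rfl
  have hSm : ∀ θ : EuclideanSpace ℝ (Fin d),
      MeasurableSet ((fun x => x + (θ, θ)) ⁻¹' rejZ d D) := by
    intro θ
    apply measurableSet_preimage _ hS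
    fun_prop
  have hβ2 : ∀ θ, β θ =
      ∫ u, ((fun x => x + (θ, θ)) ⁻¹' rejZ d D).indicator (fun _ => (1 : ℝ)) u ∂(γ.prod γ) := by
    intro θ
    rw [hβ1, integral_indicator_const _ (hSm θ)]
    simp [Measure.real]
  have h0 : β 0 = α := by
    rw [hβ1, ← hD]
    congr 1
    rw [Measure.prod_apply (hSm 0)]
    have : ∀ᵐ x ∂γ, γ (Prod.mk x ⁻¹' ((fun x => x + (0, 0)) ⁻¹' rejZ d D))
        = gaussianReal 0 1 (Set.Ioi D) := by
      filter_upwards [stdG_ae_ne hd 0] with x hx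
      rw [← stdG_apply x hx _ measurableSet_Ioi]
      congr 1
      ext y
      simp [rejZ, hx]
    rw [lintegral_congr_ae this]
    simp
  have hcont : Continuous β := by
    rw [continuous_iff_continuousAt]
    intro θ₀
    rw [funext hβ2]
    refine tendsto_integral_filter_of_dominated_convergence (fun _ => 1) ?_ ?_
      (integrable_const _) ?_
    · exact Eventually.of_forall fun θ =>
        (measurable_const.indicator (hSm θ)).aestronglyMeasurable
    · refine Eventually.of_forall fun θ => Eventually.of_forall fun u => ?_
      by_cases h : u ∈ (fun x => x + (θ, θ)) ⁻¹' rejZ d D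
      · rw [Set.indicator_of_mem h]; simp
      · rw [Set.indicator_of_notMem h]; simp
    · filter_upwards [ae_boundary hd D θ₀] with u hu
      have c1 : ContinuousAt (fun θ => u.1 + θ) θ₀ := by fun_prop
      have c2 : ContinuousAt (fun θ => ⟪u.1 + θ, u.2 + θ⟫ / ‖u.1 + θ‖) θ₀ := by
        refine ContinuousAt.div (f := fun θ => ⟪u.1 + θ, u.2 + θ⟫) (g := fun θ => ‖u.1 + θ‖)
          ?_ ?_ (norm_ne_zero_iff.2 hu.1)
        · fun_prop
        · fun_prop
      apply tendsto_nhds_of_eventually_eq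
      rcases lt_or_gt_of_ne hu.2 with hlt | hgt
      · filter_upwards [c2.eventually_lt_const hlt] with θ hθ
        rw [Set.indicator_of_notMem, Set.indicator_of_notMem]
        · exact fun h => lt_asymm h.2 hlt
        · exact fun h => lt_asymm h.2 hθ
      · filter_upwards [c2.eventually_const_lt hgt, c1.eventually_ne hu.1] with θ hθ h1
        rw [Set.indicator_of_mem, Set.indicator_of_mem]
        · exact ⟨hu.1, hgt⟩
        · exact ⟨h1, hθ⟩
  have hlim : Tendsto β (comap (fun θ => ‖θ‖) atTop) (nhds 1) := by
    rw [funext hβ2]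
    have e1 : (1 : ℝ) = ∫ u, (1 : ℝ) ∂(γ.prod γ) := by simp
    rw [e1]
    refine tendsto_integral_filter_of_dominated_convergence (fun _ => 1) ?_ ?_
      (integrable_const _) ?_
    · exact Eventually.of_forall fun θ =>
        (measurable_const.indicator (hSm θ)).aestronglyMeasurable
    · refine Eventually.of_forall fun θ => Eventually.of_forall fun u => ?_
      by_cases h : u ∈ (fun x => x + (θ, θ)) ⁻¹' rejZ d D
      · rw [Set.indicator_of_mem h]; simp
      · rw [Set.indicator_of_notMem h]; simp
    · refine Eventually.of_forall fun u => ?_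
      apply tendsto_nhds_of_eventually_eq
      filter_upwards [tendsto_comap.eventually (eventually_gt_atTop (‖u.1‖ + ‖u.2 - u.1‖ + |D|))]
        with θ hθ
      suffices hmem : u ∈ (fun x => x + (θ, θ)) ⁻¹' rejZ d D by
        rw [Set.indicator_of_mem hmem]
        exact e1.symm
      have n1 : ‖θ‖ ≤ ‖u.1 + θ‖ + ‖u.1‖ := by
        have := norm_sub_le (u.1 + θ) u.1
        simpa using this
      have n2 := abs_real_inner_le_norm (u.1 + θ) (u.2 - u.1)
      have n3 : ⟪u.1 + θ, u.2 + θ⟫ = ‖u.1 + θ‖ ^ 2 + ⟪u.1 + θ, u.2 - u.1⟫ := by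
        rw [← real_inner_self_eq_norm_sq, ← inner_add_right]
        congr 1
        abel
      have n4 := neg_abs_le ⟪u.1 + θ, u.2 - u.1⟫
      have n5 := le_abs_self D
      have n6 := abs_nonneg D
      have n7 := norm_nonneg (u.2 - u.1)
      have hp : 0 < ‖u.1 + θ‖ := by linarith
      refine ⟨norm_pos_iff.1 hp, ?_⟩
      change D < ⟪u.1 + θ, u.2 + θ⟫ / ‖u.1 + θ‖
      rw [lt_div_iff₀ hp, n3]
      have : 0 < ‖u.1 + θ‖ * (‖u.1 + θ‖ - ‖u.2 - u.1‖ - D) := mul_pos hp (by linarith)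
      nlinarith
  have h3 : ∀ ε : ℝ, 0 < ε → ∃ R : ℝ, ∀ θ, R < ‖θ‖ → 1 - ε < β θ := by
    intro ε hε
    have := hlim.eventually (lt_mem_nhds (show 1 - ε < 1 by linarith))
    rw [eventually_comap] at this
    obtain ⟨R, hR⟩ := eventually_atTop.1 this
    exact ⟨R, fun θ hθ => hR _ hθ.le θ rfl⟩
  refine ⟨h0, hcont, h3, fun ε hε => ?_⟩
  obtain ⟨R, hR⟩ := h3 ε hε
  refine ⟨Metric.closedBall 0 R, isCompact_closedBall _ _, fun θ hθ => ?_⟩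
  rw [mem_closedBall_zero_iff]
  by_contra! hc
  have := hR θ hc
  simp only [Set.mem_ofPred_eq] at hθ
  linarith
end

section
/- Moran's multi-dimensional Gaussian test φ is inadmissible among regular tests: φ ∈ Φ₀(α) \ A₀(α), i.e. there exists φ' ∈ Φ₀(α) with β_{φ'}(θ) ≥ β_φ(θ) for all θ ∈ ℝ^d\{0} and strict inequality for some θ ≠ 0. -/
open MeasureTheory ProbabilityTheory Filter
open scoped RealInnerProductSpace

/-- the joint density -/
noncomputable def mDens (d : ℕ) (θ : EuclideanSpace ℝ (Fin d))
    (x : EuclideanSpace ℝ (Fin d) × EuclideanSpace ℝ (Fin d)) : ℝ :=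
  (2 * Real.pi) ^ (-(d : ℝ)) * Real.exp (-(‖x.1 - θ‖ ^ 2 + ‖x.2 - θ‖ ^ 2) / 2)

/-- the marginal density -/
noncomputable def mG (d : ℕ) (y : EuclideanSpace ℝ (Fin d)) : ℝ :=
  (2 * Real.pi) ^ (-(d : ℝ) / 2) * Real.exp (-(1 / 2 : ℝ) * ‖y‖ ^ 2)

/-- the standard Gaussian -/
noncomputable def mGam (d : ℕ) : Measure (EuclideanSpace ℝ (Fin d)) :=
  volume.withDensity (fun y => ENNReal.ofReal (mG d y))

/-- the law -/
noncomputable def mP (d : ℕ) (θ : EuclideanSpace ℝ (Fin d)) :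
    Measure (EuclideanSpace ℝ (Fin d) × EuclideanSpace ℝ (Fin d)) :=
  volume.withDensity (fun x => ENNReal.ofReal (mDens d θ x))

lemma mDens_pos (d : ℕ) (θ x) : 0 < mDens d θ x := by
  unfold mDens; positivity

lemma mG_pos (d : ℕ) (x) : 0 < mG d x := by
  unfold mG; positivity

lemma mG_cont (d : ℕ) : Continuous (mG d) := by
  unfold mG; fun_prop

lemma mDens_cont (d : ℕ) (θ) : Continuous (mDens d θ) := by
  unfold mDens; fun_prop

lemma exp_integrable (d : ℕ) {b : ℝ} (hb : 0 < b) :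
    Integrable (fun v : EuclideanSpace ℝ (Fin d) => Real.exp (-b * ‖v‖ ^ 2)) := by
  have h := GaussianFourier.integrable_cexp_neg_mul_sq_norm_add (b := (b : ℂ)) (by simpa using hb)
    0 (0 : EuclideanSpace ℝ (Fin d))
  have h2 := h.norm
  refine h2.congr (ae_of_all _ fun v => ?_)
  simp [Complex.norm_exp, ← Complex.ofReal_pow]

lemma mG_integrable (d : ℕ) : Integrable (mG d) := by
  unfold mG
  exact (exp_integrable d (by norm_num)).const_mul _

lemma mGam_integral (d : ℕ) {F : Type*} [NormedAddCommGroup F] [NormedSpace ℝ F]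
    (g : EuclideanSpace ℝ (Fin d) → F) :
    ∫ y, g y ∂(mGam d) = ∫ y, mG d y • g y := by
  unfold mGam
  rw [integral_withDensity_eq_integral_toReal_smul
    (by have := (mG_cont d).measurable; fun_prop) (ae_of_all _ fun _ => ENNReal.ofReal_lt_top)]
  congr 1; ext y
  rw [ENNReal.toReal_ofReal (mG_pos d y).le]

lemma mG_int (d : ℕ) : ∫ y, mG d y = 1 := by
  unfold mG
  rw [integral_const_mul, GaussianFourier.integral_rexp_neg_mul_sq_norm (by norm_num)]
  have : Real.pi / (1/2) = 2 * Real.pi := by ring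
  rw [this, ← Real.rpow_add (by positivity)]
  simp [neg_div]

instance mGam_prob (d : ℕ) : IsProbabilityMeasure (mGam d) := by
  constructor
  unfold mGam
  rw [withDensity_apply _ MeasurableSet.univ, Measure.restrict_univ,
    ← ofReal_integral_eq_lintegral_ofReal (mG_integrable d) (ae_of_all _ fun y => (mG_pos d y).le),
    mG_int]
  simp

lemma mGam_char (d : ℕ) (t : EuclideanSpace ℝ (Fin d)) :
    charFun (mGam d) t = Complex.exp (-(‖t‖ ^ 2 : ℝ) / 2) := by
  rw [charFun_apply, mGam_integral]
  have h := GaussianFourier.integral_cexp_neg_mul_sq_norm_add (b := ((1/2 : ℝ) : ℂ)) (by norm_num)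
    Complex.I t
  have h1 : ∀ y, mG d y • Complex.exp (⟪y, t⟫ * Complex.I) =
      (((2 * Real.pi) ^ (-(d : ℝ) / 2) : ℝ) : ℂ) *
      Complex.exp (-((1/2 : ℝ) : ℂ) * ‖y‖ ^ 2 + Complex.I * ⟪t, y⟫) := by
    intro y
    rw [Complex.exp_add, real_inner_comm t y, Complex.real_smul]
    unfold mG
    push_cast
    ring_nf
  simp_rw [h1]
  rw [integral_const_mul, h, ← mul_assoc]
  have h2 : (((2 * Real.pi) ^ (-(d : ℝ) / 2) : ℝ) : ℂ) *
    (Real.pi / ((1/2 : ℝ) : ℂ)) ^ (Module.finrank ℝ (EuclideanSpace ℝ (Fin d)) / 2 : ℂ) = 1 := by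
    have : (Real.pi / ((1/2 : ℝ) : ℂ)) = ((2 * Real.pi : ℝ) : ℂ) := by push_cast; ring
    rw [this, finrank_euclideanSpace_fin]
    have h3 : ((d : ℂ) / 2) = ((d / 2 : ℝ) : ℂ) := by push_cast; ring
    rw [h3, ← Complex.ofReal_cpow (by positivity), ← Complex.ofReal_mul,
      ← Real.rpow_add (by positivity)]
    simp [neg_div]
  rw [h2, one_mul]
  congr 1
  push_cast
  rw [Complex.I_sq]; ring

lemma mGam_map (d : ℕ) (u : EuclideanSpace ℝ (Fin d)) (hu : ‖u‖ = 1) :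
    (mGam d).map (fun y => ⟪u, y⟫) = gaussianReal 0 1 := by
  have hm : Measurable (fun y : EuclideanSpace ℝ (Fin d) => ⟪u, y⟫) := by fun_prop
  have : IsProbabilityMeasure ((mGam d).map (fun y => ⟪u, y⟫)) :=
    Measure.isProbabilityMeasure_map hm.aemeasurable
  apply Measure.ext_of_charFun
  ext t
  rw [charFun_gaussianReal, charFun_apply_real, integral_map hm.aemeasurable
    (Continuous.aestronglyMeasurable (by fun_prop))]
  have := mGam_char d (t • u)
  rw [charFun_apply] at this
  rw [norm_smul, hu] at this
  simp only [inner_smul_right, Complex.ofReal_mul] at this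
  simp_rw [real_inner_comm _ u]
  rw [this]
  simp [← Complex.ofReal_pow]
  ring_nf

lemma mP_zero (d : ℕ) : mP d 0 = (mGam d).prod (mGam d) := by
  have := (mG_cont d).measurable
  unfold mP mGam
  rw [prod_withDensity (by fun_prop) (by fun_prop)]
  rw [← Measure.volume_eq_prod]
  congr 1; ext x
  rw [← ENNReal.ofReal_mul (mG_pos d _).le]
  congr 1
  unfold mDens mG
  rw [mul_mul_mul_comm, ← Real.rpow_add (by positivity), ← Real.exp_add]
  simp only [sub_zero]
  congr 2 <;> ring

instance mP_prob (d : ℕ) : IsProbabilityMeasure (mP d 0) := by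
  rw [mP_zero]; infer_instance

lemma mP_integral (d : ℕ) (θ)
    (g : EuclideanSpace ℝ (Fin d) × EuclideanSpace ℝ (Fin d) → ℝ) :
    ∫ y, g y ∂(mP d θ) = ∫ y, mDens d θ y * g y := by
  unfold mP
  rw [integral_withDensity_eq_integral_toReal_smul
    (by have := (mDens_cont d θ).measurable; fun_prop) (ae_of_all _ fun _ => ENNReal.ofReal_lt_top)]
  congr 1; ext y
  rw [ENNReal.toReal_ofReal (mDens_pos d θ y).le, smul_eq_mul]

lemma mP_shift (d : ℕ) (θ)
    (g : EuclideanSpace ℝ (Fin d) × EuclideanSpace ℝ (Fin d) → ℝ) :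
    ∫ y, g y ∂(mP d θ) = ∫ y, g (y + (θ, θ)) ∂(mP d 0) := by
  have : (volume : Measure (EuclideanSpace ℝ (Fin d) ×
      EuclideanSpace ℝ (Fin d))).IsAddRightInvariant := by
    rw [Measure.volume_eq_prod]; infer_instance
  rw [mP_integral, mP_integral, ← integral_add_right_eq_self _ (θ, θ)]
  simp [mDens]

/-- Moran's test -/
noncomputable def mPhi (d : ℕ) (D : ℝ) :
    EuclideanSpace ℝ (Fin d) × EuclideanSpace ℝ (Fin d) → ℝ :=
  Set.indicator
      {x : EuclideanSpace ℝ (Fin d) × EuclideanSpace ℝ (Fin d) |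
        x.1 ≠ 0 ∧ D < ⟪x.1, x.2⟫ / ‖x.1‖} (fun _ => (1 : ℝ))

lemma mSet_meas (d : ℕ) (D : ℝ) : MeasurableSet
      {x : EuclideanSpace ℝ (Fin d) × EuclideanSpace ℝ (Fin d) |
        x.1 ≠ 0 ∧ D < ⟪x.1, x.2⟫ / ‖x.1‖} := by
  apply MeasurableSet.inter
  · exact (measurableSet_singleton (0 : EuclideanSpace ℝ (Fin d))).compl.preimage measurable_fst
  · have h : Measurable (fun x : EuclideanSpace ℝ (Fin d) × EuclideanSpace ℝ (Fin d) =>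
        ⟪x.1, x.2⟫ / ‖x.1‖) := by fun_prop
    exact measurableSet_lt measurable_const h

lemma mPhi_meas (d : ℕ) (D : ℝ) : Measurable (mPhi d D) :=
  measurable_const.indicator (mSet_meas d D)

lemma mPhi_mem (d : ℕ) (D : ℝ) (x) : mPhi d D x ∈ Set.Icc (0 : ℝ) 1 := by
  unfold mPhi
  by_cases h : x ∈ {x : EuclideanSpace ℝ (Fin d) × EuclideanSpace ℝ (Fin d) |
        x.1 ≠ 0 ∧ D < ⟪x.1, x.2⟫ / ‖x.1‖}
  · rw [Set.indicator_of_mem h]; simp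
  · rw [Set.indicator_of_notMem h]; simp

lemma mPhi_level (d : ℕ) [NeZero d] (D : ℝ) :
    ∫ x, mPhi d D x ∂(mP d 0) = (gaussianReal 0 1 (Set.Ioi D)).toReal := by
  unfold mPhi
  rw [integral_indicator_const _ (mSet_meas d D), smul_eq_mul, mul_one, Measure.real]
  congr 1
  rw [mP_zero, Measure.prod_apply (mSet_meas d D)]
  have h0 : ∀ᵐ x ∂(mGam d), x ≠ 0 := by
    have h1 : mGam d ≪ volume := withDensity_absolutelyContinuous _ _
    apply h1.ae_le
    have : Nontrivial (EuclideanSpace ℝ (Fin d)) := inferInstance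
    exact compl_mem_ae_iff.2 (measure_singleton (0 : EuclideanSpace ℝ (Fin d)))
  rw [lintegral_congr_ae (g := fun _ => gaussianReal 0 1 (Set.Ioi D))]
  · simp
  filter_upwards [h0] with x hx
  have hn : ‖x‖ ≠ 0 := by simpa using hx
  rw [← mGam_map d (‖x‖⁻¹ • x) (by rw [norm_smul]; simp [hn]),
    Measure.map_apply (by fun_prop) measurableSet_Ioi]
  congr 1
  ext y
  simp [hx, inner_smul_left, div_eq_inv_mul]

lemma mDens_eq (d : ℕ) (θ x) : mDens d θ x = mG d (x.1 - θ) * mG d (x.2 - θ) := by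
  unfold mDens mG
  rw [mul_mul_mul_comm, ← Real.rpow_add (by positivity), ← Real.exp_add]
  congr 2 <;> ring

lemma mDens_integrable (d : ℕ) (θ) : Integrable (mDens d θ) := by
  have h := ((mG_integrable d).comp_sub_right θ).mul_prod ((mG_integrable d).comp_sub_right θ)
  rw [← Measure.volume_eq_prod] at h
  exact h.congr (ae_of_all _ fun x => (mDens_eq d θ x).symm)

lemma mDens_cont_left (d : ℕ) (x) : Continuous (fun θ => mDens d θ x) := by
  unfold mDens; fun_prop

lemma mDens_mul_integrable (d : ℕ) (θ)
    (ψ : EuclideanSpace ℝ (Fin d) × EuclideanSpace ℝ (Fin d) → ℝ)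
    (hm : Measurable ψ) (hψ : ∀ x, ψ x ∈ Set.Icc (0 : ℝ) 1) :
    Integrable (fun x => mDens d θ x * ψ x) := by
  refine (mDens_integrable d θ).mono
    ((mDens_cont d θ).measurable.mul hm).aestronglyMeasurable (ae_of_all _ fun x => ?_)
  rw [norm_mul]
  apply mul_le_of_le_one_right (norm_nonneg _)
  rw [Real.norm_of_nonneg (hψ x).1]
  exact (hψ x).2

lemma reg_cont (d : ℕ) (ψ : EuclideanSpace ℝ (Fin d) × EuclideanSpace ℝ (Fin d) → ℝ)
    (hm : Measurable ψ) (hψ : ∀ x, ψ x ∈ Set.Icc (0 : ℝ) 1) :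
    Continuous (fun θ : EuclideanSpace ℝ (Fin d) => 1 - ∫ x, ψ x ∂(mP d θ)) := by
  refine continuous_const.sub ?_
  simp_rw [mP_integral]
  rw [continuous_iff_continuousAt]
  intro θ₀
  refine continuousAt_of_dominated (bound := fun x => (2 * Real.pi) ^ (-(d : ℝ)) * (Real.exp 1 *
    (Real.exp (-(1/4 : ℝ) * ‖x.1 - θ₀‖ ^ 2) * Real.exp (-(1/4 : ℝ) * ‖x.2 - θ₀‖ ^ 2)))) ?_ ?_ ?_ ?_
  · exact Eventually.of_forall fun θ =>
      ((mDens_cont d θ).measurable.mul hm).aestronglyMeasurable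
  · filter_upwards [Metric.ball_mem_nhds θ₀ one_pos] with θ hθ
    refine ae_of_all _ fun x => ?_
    rw [norm_mul, Real.norm_of_nonneg (mDens_pos d θ x).le, Real.norm_of_nonneg (hψ x).1]
    refine (mul_le_of_le_one_right (mDens_pos d θ x).le (hψ x).2).trans ?_
    unfold mDens
    rw [← Real.exp_add, ← Real.exp_add]
    gcongr
    have hθ' : ‖θ - θ₀‖ < 1 := by simpa [dist_eq_norm] using hθ
    have key : ∀ y : EuclideanSpace ℝ (Fin d), ‖y - θ₀‖ ^ 2 ≤ 2 * ‖y - θ‖ ^ 2 + 2 := by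
      intro y
      have h1 : ‖y - θ₀‖ ≤ ‖y - θ‖ + ‖θ - θ₀‖ := norm_sub_le_norm_sub_add_norm_sub _ _ _
      have h2 : ‖y - θ₀‖ ≤ ‖y - θ‖ + 1 := by linarith
      nlinarith [norm_nonneg (y - θ₀), norm_nonneg (y - θ), sq_nonneg (‖y - θ‖ - 1)]
    have := key x.1
    have := key x.2
    linarith
  · have h := ((exp_integrable d (b := 1/4) (by norm_num)).comp_sub_right θ₀).mul_prod
      ((exp_integrable d (b := 1/4) (by norm_num)).comp_sub_right θ₀)
    rw [← Measure.volume_eq_prod] at h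
    exact (h.const_mul _).const_mul _
  · exact ae_of_all _ fun x => ((mDens_cont_left d x).mul continuous_const).continuousAt

lemma mPhi_one (d : ℕ) (D : ℝ) (x) (hx : x.1 ≠ 0) (h : D * ‖x.1‖ < ⟪x.1, x.2⟫) :
    mPhi d D x = 1 := by
  unfold mPhi
  rw [Set.indicator_of_mem]
  exact ⟨hx, (lt_div_iff₀ (norm_pos_iff.2 hx)).2 h⟩

lemma mPhi_zero (d : ℕ) (D : ℝ) (x) (h : ⟪x.1, x.2⟫ < D * ‖x.1‖) :
    mPhi d D x = 0 := by
  unfold mPhi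
  rw [Set.indicator_of_notMem]
  rintro ⟨hx, h'⟩
  rw [lt_div_iff₀ (norm_pos_iff.2 hx)] at h'
  linarith

lemma reg_van (d : ℕ) (D : ℝ)
    (ψ : EuclideanSpace ℝ (Fin d) × EuclideanSpace ℝ (Fin d) → ℝ)
    (hm : Measurable ψ) (hψ : ∀ x, ψ x ∈ Set.Icc (0 : ℝ) 1) (M : ℝ)
    (hM : ∀ x, M < ‖x‖ → ψ x = mPhi d D x) (ε : ℝ) (hε : 0 < ε) :
    ∃ K : Set (EuclideanSpace ℝ (Fin d)), IsCompact K ∧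
        {θ : EuclideanSpace ℝ (Fin d) | ε ≤ 1 - ∫ x, ψ x ∂(mP d θ)} ⊆ K := by
  have ht : Tendsto (fun θ : EuclideanSpace ℝ (Fin d) => ∫ x, ψ x ∂(mP d θ))
      (comap (fun θ => ‖θ‖) atTop) (nhds (∫ x, (1 : ℝ) ∂(mP d 0))) := by
    simp_rw [mP_shift d _ ψ]
    refine tendsto_integral_filter_of_dominated_convergence (fun _ => 1) ?_ ?_ ?_ ?_
    · exact Eventually.of_forall fun θ =>
        (hm.comp (measurable_add_const (θ, θ))).aestronglyMeasurable
    · refine Eventually.of_forall fun θ => ae_of_all _ fun x => ?_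
      rw [Real.norm_of_nonneg (hψ _).1]
      exact (hψ _).2
    · exact integrable_const _
    · refine ae_of_all _ fun u => ?_
      apply tendsto_const_nhds.congr'
      have hev : ∀ᶠ θ : EuclideanSpace ℝ (Fin d) in comap (fun θ => ‖θ‖) atTop,
          |M| + 2 * ‖u.1‖ + ‖u.2‖ + |D| + 1 < ‖θ‖ :=
        tendsto_comap.eventually (eventually_gt_atTop _)
      filter_upwards [hev] with θ hθ
      have h1 : ‖θ‖ ≤ ‖u.1 + θ‖ + ‖u.1‖ := by
        have := norm_sub_le (u.1 + θ) u.1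
        simpa using this
      have h2 : ‖u.1 + θ‖ ≤ ‖u + (θ, θ)‖ := norm_fst_le (u + (θ, θ))
      have hM' := le_abs_self M
      have hD' := le_abs_self D
      have hu1 := norm_nonneg u.1
      have hu2 := norm_nonneg u.2
      have hDn := abs_nonneg D
      have hMn := abs_nonneg M
      rw [hM _ (by linarith)]
      have hp : 0 < ‖u.1 + θ‖ := by linarith
      symm
      apply mPhi_one
      · exact norm_pos_iff.1 hp
      · change D * ‖u.1 + θ‖ < ⟪u.1 + θ, u.2 + θ⟫
        have e : u.2 + θ = (u.1 + θ) - (u.1 - u.2) := by abel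
        rw [e, inner_sub_right, real_inner_self_eq_norm_sq]
        have h3 := real_inner_le_norm (u.1 + θ) (u.1 - u.2)
        have h4 := norm_sub_le u.1 u.2
        have h5 : ‖u.1 + θ‖ * ‖u.1 - u.2‖ ≤ ‖u.1 + θ‖ * (‖u.1‖ + ‖u.2‖) := by gcongr
        nlinarith
  have ht' : ∀ᶠ θ : EuclideanSpace ℝ (Fin d) in comap (fun θ => ‖θ‖) atTop,
      1 - ε < ∫ x, ψ x ∂(mP d θ) := by
    apply ht.eventually (lt_mem_nhds _)
    simp [hε]
  rw [eventually_comap, eventually_atTop] at ht'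
  obtain ⟨R, hR⟩ := ht'
  refine ⟨Metric.closedBall 0 R, isCompact_closedBall _ _, fun θ hθ => ?_⟩
  by_contra hc
  have : R ≤ ‖θ‖ := by
    simp at hc; exact hc.le
  have := hR ‖θ‖ this θ rfl
  simp only [Set.mem_ofPred_eq] at hθ
  linarith

/-- perturbation bump -/
noncomputable def mW (d : ℕ) (r : ℝ) (p : EuclideanSpace ℝ (Fin d) × EuclideanSpace ℝ (Fin d)) :
    EuclideanSpace ℝ (Fin d) × EuclideanSpace ℝ (Fin d) → ℝ :=
  Set.indicator (Metric.ball p r) (fun x => Real.exp ((‖x.1‖ ^ 2 + ‖x.2‖ ^ 2) / 2))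

/-- Laplace transform of a ball -/
noncomputable def mL (d : ℕ) (r : ℝ) (θ : EuclideanSpace ℝ (Fin d)) : ℝ :=
  ∫ x in Metric.ball (0 : EuclideanSpace ℝ (Fin d) × EuclideanSpace ℝ (Fin d)) r,
    Real.exp ⟪θ, x.1 + x.2⟫

lemma ball_integrable (d : ℕ) (r : ℝ) (p : EuclideanSpace ℝ (Fin d) × EuclideanSpace ℝ (Fin d))
    (f : EuclideanSpace ℝ (Fin d) × EuclideanSpace ℝ (Fin d) → ℝ) (hf : Continuous f) :
    IntegrableOn f (Metric.ball p r) :=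
  (hf.continuousOn.integrableOn_compact (isCompact_closedBall p r)).mono_set
    Metric.ball_subset_closedBall

lemma mL_pos (d : ℕ) (r : ℝ) (hr : 0 < r) (θ : EuclideanSpace ℝ (Fin d)) : 0 < mL d r θ := by
  unfold mL
  have : NeZero ((volume : Measure (EuclideanSpace ℝ (Fin d) ×
      EuclideanSpace ℝ (Fin d))).restrict (Metric.ball 0 r)) := by
    constructor
    rw [Ne, Measure.restrict_eq_zero]
    exact (Metric.measure_ball_pos _ _ hr).ne'
  exact integral_exp_pos (ball_integrable d r 0 _ (by fun_prop))

lemma mDens_mW (d : ℕ) (r : ℝ) (p θ x) : mDens d θ x * mW d r p x =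
    (Metric.ball p r).indicator (fun x => (2 * Real.pi) ^ (-(d : ℝ)) * Real.exp (-‖θ‖ ^ 2) *
      Real.exp ⟪θ, x.1 + x.2⟫) x := by
  unfold mW
  by_cases h : x ∈ Metric.ball p r
  · rw [Set.indicator_of_mem h, Set.indicator_of_mem h]
    unfold mDens
    rw [mul_assoc, ← Real.exp_add, mul_assoc, ← Real.exp_add]
    congr 2
    rw [norm_sub_sq_real, norm_sub_sq_real, inner_add_right, real_inner_comm θ, real_inner_comm θ]
    ring
  · rw [Set.indicator_of_notMem h, Set.indicator_of_notMem h, mul_zero]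

lemma mW_integrable (d : ℕ) (r : ℝ) (p θ) : Integrable (fun x => mDens d θ x * mW d r p x) := by
  simp_rw [mDens_mW]
  rw [integrable_indicator_iff measurableSet_ball]
  exact ball_integrable d r p _ (by fun_prop)

lemma mW_int (d : ℕ) (r : ℝ) (p θ) : ∫ x, mDens d θ x * mW d r p x =
    (2 * Real.pi) ^ (-(d : ℝ)) * Real.exp (-‖θ‖ ^ 2) * mL d r θ * Real.exp ⟪θ, p.1 + p.2⟫ := by
  have : (volume : Measure (EuclideanSpace ℝ (Fin d) ×
      EuclideanSpace ℝ (Fin d))).IsAddRightInvariant := by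
    rw [Measure.volume_eq_prod]; infer_instance
  simp_rw [mDens_mW]
  rw [← integral_add_right_eq_self _ p]
  unfold mL
  rw [mul_assoc, ← integral_mul_const, ← integral_const_mul, ← integral_indicator measurableSet_ball]
  congr 1; ext x
  by_cases h : x ∈ Metric.ball 0 r
  · have h' : x + p ∈ Metric.ball p r := by simpa using h
    rw [Set.indicator_of_mem h, Set.indicator_of_mem h', ← Real.exp_add, ← inner_add_right]
    congr 3
    simp only [Prod.fst_add, Prod.snd_add]
    abel
  · have h' : x + p ∉ Metric.ball p r := by simpa using h
    rw [Set.indicator_of_notMem h, Set.indicator_of_notMem h']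

lemma mW_meas (d : ℕ) (r : ℝ) (p) : Measurable (mW d r p) := by
  unfold mW
  exact Measurable.indicator (by fun_prop) measurableSet_ball

lemma mW_nonneg (d : ℕ) (r : ℝ) (p x) : 0 ≤ mW d r p x :=
  Set.indicator_nonneg (fun _ _ => (Real.exp_pos _).le) _

lemma mW_le (d : ℕ) (r R : ℝ) (p x) (hR : ‖p‖ + r ≤ R) : mW d r p x ≤ Real.exp (R ^ 2) := by
  unfold mW
  apply Set.indicator_le' (g := fun _ => Real.exp (R ^ 2))
  · intro y hy
    have h : ‖y‖ ≤ R := by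
      have h1 : ‖y - p‖ < r := by simpa [dist_eq_norm] using hy
      have h2 := norm_sub_norm_le y p
      linarith
    have h1 := (norm_fst_le y).trans h
    have h2 := (norm_snd_le y).trans h
    gcongr
    nlinarith [norm_nonneg y.1, norm_nonneg y.2]
  · intro y _; positivity

lemma mW_far (d : ℕ) (r R : ℝ) (p x) (hR : ‖p‖ + r ≤ R) (hx : R < ‖x‖) : mW d r p x = 0 := by
  unfold mW
  apply Set.indicator_of_notMem
  intro hy
  have h1 : ‖x - p‖ < r := by simpa [dist_eq_norm] using hy
  have h2 := norm_sub_norm_le x p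
  linarith

lemma exists_pts (d : ℕ) (D : ℝ) (e : EuclideanSpace ℝ (Fin d)) (he : ‖e‖ = 1) :
    ∃ p₁ p₂ p₃ : EuclideanSpace ℝ (Fin d) × EuclideanSpace ℝ (Fin d), ∃ r : ℝ, 0 < r ∧
      p₁.1 + p₁.2 = p₃.1 + p₃.2 + e ∧ p₂.1 + p₂.2 = p₃.1 + p₃.2 - e ∧
      (∀ x ∈ Metric.ball p₁ r, mPhi d D x = 0) ∧ (∀ x ∈ Metric.ball p₂ r, mPhi d D x = 0) ∧
      (∀ x ∈ Metric.ball p₃ r, mPhi d D x = 1) := by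
  have hc1 : Continuous (fun x : EuclideanSpace ℝ (Fin d) × EuclideanSpace ℝ (Fin d) =>
    ⟪x.1, x.2⟫) := by fun_prop
  have hc2 : Continuous (fun x : EuclideanSpace ℝ (Fin d) × EuclideanSpace ℝ (Fin d) =>
    D * ‖x.1‖) := by fun_prop
  have hz : ∀ p : EuclideanSpace ℝ (Fin d) × EuclideanSpace ℝ (Fin d),
      ⟪p.1, p.2⟫ < D * ‖p.1‖ → ∃ r > 0, ∀ x ∈ Metric.ball p r, mPhi d D x = 0 := by
    intro p hp
    obtain ⟨r, hr, h⟩ := Metric.isOpen_iff.1 (isOpen_lt hc1 hc2) p hp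
    exact ⟨r, hr, fun x hx => mPhi_zero d D x (h hx)⟩
  have ho : ∀ p : EuclideanSpace ℝ (Fin d) × EuclideanSpace ℝ (Fin d), p.1 ≠ 0 →
      D * ‖p.1‖ < ⟪p.1, p.2⟫ → ∃ r > 0, ∀ x ∈ Metric.ball p r, mPhi d D x = 1 := by
    intro p hp0 hp
    obtain ⟨r, hr, h⟩ := Metric.isOpen_iff.1 ((isOpen_ne_fun continuous_fst
      (continuous_const (y := (0 : EuclideanSpace ℝ (Fin d))))).inter (isOpen_lt hc2 hc1)) p
      ⟨hp0, hp⟩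
    exact ⟨r, hr, fun x hx => mPhi_one d D x (h hx).1 (h hx).2⟩
  have hee : ⟪e, e⟫ = 1 := by rw [real_inner_self_eq_norm_sq, he]; norm_num
  have e0 : e ≠ 0 := by intro h; simp [h] at he
  have hDn := abs_nonneg D
  have hD1 := le_abs_self D
  have hD2 := neg_abs_le D
  set R := |D| + 1 with hRdef
  set L := 2 * R + 2 + |D| with hLdef
  have hR : 0 < R := by linarith
  have hL : 0 < L := by linarith
  have nL : ‖L • e‖ = L := by rw [norm_smul, he, Real.norm_of_nonneg hL.le, mul_one]
  have nR : ‖R • e‖ = R := by rw [norm_smul, he, Real.norm_of_nonneg hR.le, mul_one]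
  obtain ⟨r1, hr1, h1⟩ := hz (L • e, (2 * R - L + 1) • e) (by
    simp only [nL, inner_smul_left, inner_smul_right, hee]
    simp
    nlinarith)
  obtain ⟨r2, hr2, h2⟩ := hz (L • e, (2 * R - L - 1) • e) (by
    simp only [nL, inner_smul_left, inner_smul_right, hee]
    simp
    nlinarith)
  obtain ⟨r3, hr3, h3⟩ := ho (R • e, R • e) (by simp [e0, hR.ne']) (by
    simp only [nR, inner_smul_left, inner_smul_right, hee]
    simp
    nlinarith)
  refine ⟨_, _, _, min r1 (min r2 r3), lt_min hr1 (lt_min hr2 hr3), ?_, ?_,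
    fun x hx => h1 x (Metric.ball_subset_ball (min_le_left _ _) hx),
    fun x hx => h2 x (Metric.ball_subset_ball ((min_le_right _ _).trans (min_le_left _ _)) hx),
    fun x hx => h3 x (Metric.ball_subset_ball ((min_le_right _ _).trans (min_le_right _ _)) hx)⟩
  · simp only; module
  · simp only; module

lemma exists_better (d : ℕ) (hd : 1 ≤ d) (D : ℝ) :
    ∃ ψ : EuclideanSpace ℝ (Fin d) × EuclideanSpace ℝ (Fin d) → ℝ, Measurable ψ ∧
      (∀ x, ψ x ∈ Set.Icc (0 : ℝ) 1) ∧ (∃ M : ℝ, ∀ x, M < ‖x‖ → ψ x = mPhi d D x) ∧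
      (∫ x, ψ x ∂(mP d 0) = ∫ x, mPhi d D x ∂(mP d 0)) ∧
      (∀ θ, ∫ x, mPhi d D x ∂(mP d θ) ≤ ∫ x, ψ x ∂(mP d θ)) ∧
      (∃ θ, θ ≠ 0 ∧ ∫ x, mPhi d D x ∂(mP d θ) < ∫ x, ψ x ∂(mP d θ)) := by
  obtain ⟨e, he⟩ : ∃ e : EuclideanSpace ℝ (Fin d), ‖e‖ = 1 :=
    ⟨EuclideanSpace.single ⟨0, hd⟩ 1, by simp⟩
  have e0 : e ≠ 0 := by intro h; simp [h] at he
  obtain ⟨p₁, p₂, p₃, r, hr, hs1, hs2, h1, h2, h3⟩ := exists_pts d D e he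
  set R := ‖p₁‖ + ‖p₂‖ + ‖p₃‖ + r with hR
  have n1 := norm_nonneg p₁
  have n2 := norm_nonneg p₂
  have n3 := norm_nonneg p₃
  have hR1 : ‖p₁‖ + r ≤ R := by linarith
  have hR2 : ‖p₂‖ + r ≤ R := by linarith
  have hR3 : ‖p₃‖ + r ≤ R := by linarith
  set ε := (2 * Real.exp (R ^ 2))⁻¹ with hε
  have hεpos : 0 < ε := by positivity
  have hεB : ε * Real.exp (R ^ 2) = 1 / 2 := by
    rw [hε]; field_simp
  have hw : ∀ p, ‖p‖ + r ≤ R → ∀ x, 0 ≤ ε * mW d r p x ∧ ε * mW d r p x ≤ 1 / 2 := by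
    intro p hp x
    refine ⟨mul_nonneg hεpos.le (mW_nonneg d r p x), ?_⟩
    rw [← hεB]
    exact mul_le_mul_of_nonneg_left (mW_le d r R p x hp) hεpos.le
  have hpow : ∀ θ, ∫ x, (mPhi d D x + ε * (mW d r p₁ x + mW d r p₂ x - 2 * mW d r p₃ x)) ∂(mP d θ)
      = ∫ x, mPhi d D x ∂(mP d θ) + ε * ((2 * Real.pi) ^ (-(d : ℝ)) * Real.exp (-‖θ‖ ^ 2) *
        mL d r θ * Real.exp ⟪θ, p₃.1 + p₃.2⟫) * (Real.exp ⟪θ, e⟫ + Real.exp (-⟪θ, e⟫) - 2) := by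
    intro θ
    rw [mP_integral, mP_integral]
    have i0 := mDens_mul_integrable d θ _ (mPhi_meas d D) (mPhi_mem d D)
    have i1 := mW_integrable d r p₁ θ
    have i2 := mW_integrable d r p₂ θ
    have i3 := mW_integrable d r p₃ θ
    have i12 : Integrable (fun x => mDens d θ x * mW d r p₁ x + mDens d θ x * mW d r p₂ x) :=
      i1.add i2
    have i123 : Integrable (fun x => mDens d θ x * mW d r p₁ x + mDens d θ x * mW d r p₂ x
        - 2 * (mDens d θ x * mW d r p₃ x)) := i12.sub (i3.const_mul 2)
    have : ∀ x, mDens d θ x * (mPhi d D x + ε * (mW d r p₁ x + mW d r p₂ x - 2 * mW d r p₃ x)) =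
      mDens d θ x * mPhi d D x + ε * (mDens d θ x * mW d r p₁ x + mDens d θ x * mW d r p₂ x
        - 2 * (mDens d θ x * mW d r p₃ x)) := by intro x; ring
    simp_rw [this]
    rw [integral_add i0 (i123.const_mul ε), integral_const_mul,
      integral_sub i12 (i3.const_mul 2), integral_add i1 i2, integral_const_mul,
      mW_int, mW_int, mW_int, hs1, hs2, inner_add_right _ _ e, inner_sub_right _ _ e,
      sub_eq_add_neg ⟪θ, p₃.1 + p₃.2⟫, Real.exp_add, Real.exp_add]
    ring
  have hK : ∀ θ, 0 < ε * ((2 * Real.pi) ^ (-(d : ℝ)) * Real.exp (-‖θ‖ ^ 2) *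
        mL d r θ * Real.exp ⟪θ, p₃.1 + p₃.2⟫) := by
    intro θ
    have := mL_pos d r hr θ
    positivity
  refine ⟨fun x => mPhi d D x + ε * (mW d r p₁ x + mW d r p₂ x - 2 * mW d r p₃ x), ?_, ?_,
    ⟨R, ?_⟩, ?_, ?_, e, e0, ?_⟩
  · have := mPhi_meas d D
    have := mW_meas d r p₁
    have := mW_meas d r p₂
    have := mW_meas d r p₃
    fun_prop
  · intro x
    beta_reduce
    have hw1 := hw p₁ hR1 x
    have hw2 := hw p₂ hR2 x
    have hw3 := hw p₃ hR3 x
    have hnot : ∀ p, x ∉ Metric.ball p r → mW d r p x = 0 := fun p h =>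
      Set.indicator_of_notMem h _
    by_cases hx3 : x ∈ Metric.ball p₃ r
    · have hv := h3 x hx3
      rw [hnot p₁ (fun h => by have := h1 x h; linarith),
        hnot p₂ (fun h => by have := h2 x h; linarith), hv]
      constructor <;> linarith
    · rw [hnot p₃ hx3]
      by_cases hz : mPhi d D x = 0
      · rw [hz]
        constructor <;> linarith
      · rw [hnot p₁ (fun h => hz (h1 x h)), hnot p₂ (fun h => hz (h2 x h))]
        simpa using mPhi_mem d D x
  · intro x hx
    simp only
    rw [mW_far d r R p₁ x hR1 hx, mW_far d r R p₂ x hR2 hx, mW_far d r R p₃ x hR3 hx]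
    simp
  · rw [hpow]
    simp
    norm_num
  · intro θ
    rw [hpow]
    have a := Real.add_one_le_exp ⟪θ, e⟫
    have b := Real.add_one_le_exp (-⟪θ, e⟫)
    have := mul_nonneg (hK θ).le (show 0 ≤ Real.exp ⟪θ, e⟫ + Real.exp (-⟪θ, e⟫) - 2 by linarith)
    linarith
  · rw [hpow]
    have hee : ⟪e, e⟫ = 1 := by rw [real_inner_self_eq_norm_sq, he]; norm_num
    have a := Real.add_one_lt_exp (x := ⟪e, e⟫) (by rw [hee]; norm_num)
    have b := Real.add_one_le_exp (-⟪e, e⟫)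
    have := mul_pos (hK e) (show 0 < Real.exp ⟪e, e⟫ + Real.exp (-⟪e, e⟫) - 2 by linarith)
    linarith


/- STATEMENT 16: Moran's multi-dimensional Gaussian test φ is inadmissible among
regular tests: φ ∈ Φ₀(α) \ A₀(α), i.e. there exists φ' ∈ Φ₀(α) with β_{φ'} ≥ β_φ on
ℝ^d \ {0} and strict inequality for some θ ≠ 0. -/
theorem stmt_16
    (d : ℕ) (hd : 1 ≤ d)
    -- P θ is the law of (U₁ + θ, U₂ + θ) for U₁, U₂ i.i.d. standard Gaussians in ℝ^d
    (P : EuclideanSpace ℝ (Fin d) → Measure (EuclideanSpace ℝ (Fin d) × EuclideanSpace ℝ (Fin d)))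
    (hP : P = fun θ =>
      (volume : Measure (EuclideanSpace ℝ (Fin d) × EuclideanSpace ℝ (Fin d))).withDensity
        (fun x => ENNReal.ofReal ((2 * Real.pi) ^ (-(d : ℝ)) *
          Real.exp (-(‖x.1 - θ‖ ^ 2 + ‖x.2 - θ‖ ^ 2) / 2))))
    (α : ℝ) (hα : α ∈ Set.Ioo (0 : ℝ) 1)
    -- D is the upper α-quantile of the standard one-dimensional Gaussian
    (D : ℝ) (hD : (gaussianReal 0 1 (Set.Ioi D)).toReal = α)
    -- power of an arbitrary test and Moran's test φ (indicator of the rejection zone)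
    (β : (EuclideanSpace ℝ (Fin d) × EuclideanSpace ℝ (Fin d) → ℝ) →
      EuclideanSpace ℝ (Fin d) → ℝ)
    (hβ : β = fun φ' θ => ∫ x, φ' x ∂(P θ))
    (φ : EuclideanSpace ℝ (Fin d) × EuclideanSpace ℝ (Fin d) → ℝ)
    (hφ : φ = Set.indicator
      {x : EuclideanSpace ℝ (Fin d) × EuclideanSpace ℝ (Fin d) |
        x.1 ≠ 0 ∧ D < ⟪x.1, x.2⟫ / ‖x.1‖} (fun _ => (1 : ℝ)))
    -- the class Φ₀(α) of regular tests of level α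
    (Φ₀ : Set (EuclideanSpace ℝ (Fin d) × EuclideanSpace ℝ (Fin d) → ℝ))
    (hΦ₀ : Φ₀ = {φ' | Measurable φ' ∧ (∀ x, φ' x ∈ Set.Icc (0 : ℝ) 1) ∧
      β φ' 0 = α ∧ Continuous (fun θ : EuclideanSpace ℝ (Fin d) => 1 - β φ' θ) ∧
      ∀ ε : ℝ, 0 < ε → ∃ K : Set (EuclideanSpace ℝ (Fin d)), IsCompact K ∧
        {θ : EuclideanSpace ℝ (Fin d) | ε ≤ 1 - β φ' θ} ⊆ K}) :
    -- conclusion: φ ∈ Φ₀(α) \ A₀(α)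
    φ ∈ Φ₀ ∧ ∃ φ' ∈ Φ₀,
      (∀ θ : EuclideanSpace ℝ (Fin d), θ ≠ 0 → β φ θ ≤ β φ' θ) ∧
      (∃ θ : EuclideanSpace ℝ (Fin d), θ ≠ 0 ∧ β φ θ < β φ' θ) := by
  have : NeZero d := ⟨by omega⟩
  have hP' : P = mP d := by rw [hP]; rfl
  have hφ' : φ = mPhi d D := by rw [hφ]; rfl
  subst hP' hφ' hβ hΦ₀
  have hlev := (mPhi_level d D).trans hD
  refine ⟨⟨mPhi_meas d D, mPhi_mem d D, hlev, reg_cont d _ (mPhi_meas d D) (mPhi_mem d D),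
    reg_van d D _ (mPhi_meas d D) (mPhi_mem d D) 0 (fun _ _ => rfl)⟩, ?_⟩
  obtain ⟨ψ, hm, hI, ⟨M, hM⟩, h0, hle, hlt⟩ := exists_better d hd D
  exact ⟨ψ, ⟨hm, hI, h0.trans hlev, reg_cont d _ hm hI, reg_van d D _ hm hI M hM⟩,
    fun θ _ => hle θ, hlt⟩
end
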